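/- arXiv:2410.21976 — 2 statements merged into one kernel-verified Lean document; each statement's English description precedes it below -/
import Mathlib

section
/- Define the Petz (arrow down) conditional Rényi entropy by H̄^↓_α(A|B)_ρ := (1/(1−α))·log Tr[ρ_AB^α · (I_A ⊗ ρ_B^{1−α})] for a bipartite density matrix ρ_AB. Let ρ_ABC be a density matrix on H_A ⊗ H_B ⊗ H_C and let α, β, γ ∈ (0,1) ∪ (1,2] satisfy 1/(1−α) = 1/(1−β) + 1/(1−γ). If (α−1)(β−1)(γ−1) > 0, then H̄^↓_α(AB|C)_ρ ≥ H̄^↓_β(A|BC)_ρ + H̄^↓_γ(B|C)_{ρ_BC}, where H̄^↓_α(AB|C) treats H_A ⊗ H_B as the first system and H_C as the conditioning system, H̄^↓_β(A|BC) treats H_B ⊗ H_C as the conditioning system, and ρ_BC := Tr_A ρ_ABC. If (α−1)(β−1)(γ−1) < 0, the inequality is reversed. -/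
open scoped Kronecker ComplexOrder
open Matrix

/-- Real power of a (Hermitian, in practice positive semidefinite) matrix, defined spectrally:
positive eigenvalues are raised to the power `t`, zero (and negative) eigenvalues are sent to `0`. -/
noncomputable def matPow {n : Type*} [Fintype n] [DecidableEq n]
    (M : Matrix n n ℂ) (t : ℝ) : Matrix n n ℂ :=
  if hM : M.IsHermitian then
    (hM.eigenvectorUnitary : Matrix n n ℂ) *
      Matrix.diagonal (fun i =>
        ((if 0 < hM.eigenvalues i then (hM.eigenvalues i) ^ t else 0 : ℝ) : ℂ)) *
      (star (hM.eigenvectorUnitary : Matrix n n ℂ))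
  else 0

/-- Partial trace over the first tensor factor. -/
noncomputable def ptraceFst {m n : Type*} [Fintype m] [Fintype n]
    (M : Matrix (m × n) (m × n) ℂ) : Matrix n n ℂ :=
  Matrix.of fun j j' => ∑ i, M (i, j) (i, j')

/-- Partial trace over the second tensor factor. -/
noncomputable def ptraceSnd {m n : Type*} [Fintype m] [Fintype n]
    (M : Matrix (m × n) (m × n) ℂ) : Matrix m m ℂ :=
  Matrix.of fun i i' => ∑ j, M (i, j) (i', j)

/-- A density matrix: positive semidefinite with unit trace. -/
def IsDensity {n : Type*} [Fintype n] [DecidableEq n] (ρ : Matrix n n ℂ) : Prop :=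
  ρ.PosSemidef ∧ ρ.trace = 1

/-- The Petz (arrow down) conditional Rényi entropy
`H̄^↓_α(A|B)_ρ = (1/(1−α))·log Tr[ρ_AB^α · (I_A ⊗ ρ_B^{1−α})]`. -/
noncomputable def HPetzDown {mA mB : Type*} [Fintype mA] [DecidableEq mA]
    [Fintype mB] [DecidableEq mB] (α : ℝ)
    (ρ : Matrix (mA × mB) (mA × mB) ℂ) : ℝ :=
  (1 / (1 - α)) *
    Real.log ((Matrix.trace
      (matPow ρ α * ((1 : Matrix mA mA ℂ) ⊗ₖ matPow (ptraceFst ρ) (1 - α)))).re)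

/-!
Put `a = 1 - α`, `b = 1 - β`, `c = 1 - γ`, so that `1/a = 1/b + 1/c`, and let `Q_a`, `Q_b`, `Q_c` be
the traces inside the three logarithms. Both directions of the chain rule say
`b c log Q_a ≤ a c log Q_b + a b log Q_c`. Moving terms until all coefficients are positive isolates
one of the three logarithms, so according to the signs of `a`, `b`, `c` this is a Hölder inequality
`Q_a ≤ Q_b^s Q_c^(1-s)`, `Q_b ≤ Q_a^s Q_c^(1-s)` or `Q_c ≤ Q_a^s Q_b^(1-s)` with `0 < s < 1`.

Each Hölder inequality comes from real interpolation by the quadratic K-method: `u^s v^(1-s)` is a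
positive mixture of the parallel sums of `u` and `t v`, and a parallel sum is the minimum of a sum
of two quadratic forms, so it suffices to transport decompositions `1 = Θ + (1 - Θ)` through the
partial trace. The operator Schwarz inequality bounds the transported forms, and an
Araki–Lieb–Thirring type inequality reaches the remaining range of exponents.
-/

namespace PetzChainRule

section Scalar

open MeasureTheory Set

/-- The parallel sum `(u⁻¹ + v⁻¹)⁻¹` of two nonnegative reals, written so that it vanishes as soon
as one of them does (at `u = v = 0` through `0 / 0 = 0`). -/
noncomputable def parallelSum (u v : ℝ) : ℝ := u * v / (u + v)

theorem parallelSum_mul_sq_norm_le {E : Type*} [SeminormedAddCommGroup E] {u v : ℝ}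
    (hu : 0 ≤ u) (hv : 0 ≤ v) (z x : E) :
    parallelSum u v * ‖z‖ ^ 2 ≤ u * ‖x‖ ^ 2 + v * ‖z - x‖ ^ 2 := by
  rcases (add_nonneg hu hv).eq_or_lt with h | h
  · rw [parallelSum, ← h, div_zero, zero_mul]
    positivity
  have triangle : ‖z‖ ≤ ‖x‖ + ‖z - x‖ := by simpa using norm_add_le x (z - x)
  calc parallelSum u v * ‖z‖ ^ 2
      ≤ u * v / (u + v) * (‖x‖ + ‖z - x‖) ^ 2 := by unfold parallelSum; gcongr
    _ ≤ u * ‖x‖ ^ 2 + v * ‖z - x‖ ^ 2 := by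
        rw [div_mul_eq_mul_div, div_le_iff₀ h]
        nlinarith [sq_nonneg (u * ‖x‖ - v * ‖z - x‖)]

theorem exists_sq_add_sq_eq_parallelSum {u v : ℝ} (hu : 0 ≤ u) (hv : 0 ≤ v) :
    ∃ θ : ℝ, u * θ ^ 2 + v * (1 - θ) ^ 2 = parallelSum u v := by
  rcases (add_nonneg hu hv).eq_or_lt with h | h
  · obtain ⟨rfl, rfl⟩ := (add_eq_zero_iff_of_nonneg hu hv).1 h.symm
    exact ⟨0, by simp [parallelSum]⟩
  · refine ⟨v / (u + v), ?_⟩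
    unfold parallelSum
    field_simp
    ring

theorem rpow_sub_two_mul_parallelSum_eq {u v t : ℝ} (s : ℝ) (hu : 0 ≤ u) (hv : 0 < v)
    (ht : 0 < t) :
    t ^ (s - 2) * parallelSum u (t * v) = v * Real.rpowIntegrand₀₁ s t (u / v) := by
  have hpow : t ^ (s - 2) = t ^ s / t ^ 2 := by rw [Real.rpow_sub ht]; norm_num
  have hadd : t + u / v = (u + t * v) / v := by field_simp; ring
  rw [parallelSum, Real.rpowIntegrand₀₁, hpow, hadd]
  field_simp
  ring

theorem exists_rpow_mul_rpow_eq_integral_parallelSum {s : ℝ} (hs : s ∈ Ioo (0 : ℝ) 1) :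
    ∃ C : ℝ, 0 ≤ C ∧ ∀ u v : ℝ, 0 ≤ u → 0 ≤ v →
      IntegrableOn (fun t : ℝ => t ^ (s - 2) * parallelSum u (t * v)) (Ioi 0) ∧
      u ^ s * v ^ (1 - s) = C * ∫ t in Ioi (0 : ℝ), t ^ (s - 2) * parallelSum u (t * v) := by
  refine ⟨(∫ t in Ioi (0 : ℝ), Real.rpowIntegrand₀₁ s t 1)⁻¹,
    (inv_pos.2 (Real.integral_rpowIntegrand₀₁_one_pos hs)).le, fun u v hu hv => ?_⟩
  rcases hv.eq_or_lt with rfl | hv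
  · simp [parallelSum, Real.zero_rpow (sub_pos.2 hs.2).ne']
  have integrand : EqOn (fun t => t ^ (s - 2) * parallelSum u (t * v))
      (fun t => v * Real.rpowIntegrand₀₁ s t (u / v)) (Ioi 0) :=
    fun t ht => rpow_sub_two_mul_parallelSum_eq s hu hv ht
  have huv : 0 ≤ u / v := by positivity
  constructor
  · exact IntegrableOn.congr_fun ((Real.integrableOn_rpowIntegrand₀₁_Ioi hs huv).const_mul v)
      integrand.symm measurableSet_Ioi
  · rw [setIntegral_congr_fun measurableSet_Ioi integrand, integral_const_mul, mul_left_comm,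
      ← Real.rpow_eq_const_mul_integral hs huv, Real.div_rpow hu hv.le, Real.rpow_sub hv,
      Real.rpow_one]
    field_simp

variable {ι κ : Type*} [Fintype ι] [Fintype κ]

theorem sum_mul_rpow_mul_rpow_le_of_parallelSum_le {s : ℝ} (hs : s ∈ Ioo (0 : ℝ) 1)
    {u v : ι → ℝ} {u' v' : κ → ℝ} (hu : 0 ≤ u) (hv : 0 ≤ v) (hu' : 0 ≤ u') (hv' : 0 ≤ v')
    (c : ι → ℝ)
    (h : ∀ t : ℝ, 0 < t →
      ∑ i, parallelSum (u i) (t * v i) * c i ≤ ∑ j, parallelSum (u' j) (t * v' j)) :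
    ∑ i, u i ^ s * v i ^ (1 - s) * c i ≤ ∑ j, u' j ^ s * v' j ^ (1 - s) := by
  obtain ⟨C, hC, hrep⟩ := exists_rpow_mul_rpow_eq_integral_parallelSum hs
  have left_int (i : ι) :=
    (hrep (u i) (v i) (hu i) (hv i)).1.mul_const (c i)
  have right_int (j : κ) := (hrep (u' j) (v' j) (hu' j) (hv' j)).1
  have left_eq : ∑ i, u i ^ s * v i ^ (1 - s) * c i =
      C * ∫ t in Ioi (0 : ℝ), ∑ i, t ^ (s - 2) * parallelSum (u i) (t * v i) * c i := by
    rw [integral_finsetSum _ fun i _ => left_int i, Finset.mul_sum]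
    refine Finset.sum_congr rfl fun i _ => ?_
    rw [(hrep (u i) (v i) (hu i) (hv i)).2, integral_mul_const, mul_assoc]
  have right_eq : ∑ j, u' j ^ s * v' j ^ (1 - s) =
      C * ∫ t in Ioi (0 : ℝ), ∑ j, t ^ (s - 2) * parallelSum (u' j) (t * v' j) := by
    rw [integral_finsetSum _ fun j _ => right_int j, Finset.mul_sum]
    exact Finset.sum_congr rfl fun j _ => (hrep (u' j) (v' j) (hu' j) (hv' j)).2
  rw [left_eq, right_eq]
  refine mul_le_mul_of_nonneg_left (setIntegral_mono_on
    (integrable_finsetSum _ fun i _ => left_int i)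
    (integrable_finsetSum _ fun j _ => right_int j) measurableSet_Ioi fun t ht => ?_) hC
  simp only [mul_assoc, ← Finset.mul_sum]
  exact mul_le_mul_of_nonneg_left (h t ht) (Real.rpow_nonneg (le_of_lt ht) _)

/-- The quadratic K-method: `parallelSum u₀ (t * u₁) * ‖z‖²` is the K-functional at `t` of a pair of
weighted `ℓ²` norms, and integrating it over `t` yields the interpolated norm. -/
theorem sum_rpow_mul_rpow_mul_sq_norm_le {E : Type*} [SeminormedAddCommGroup E] {s : ℝ}
    (hs : s ∈ Ioo (0 : ℝ) 1) {u₀ u₁ : ι → ℝ} {w₀ w₁ : κ → ℝ} (hu₀ : 0 ≤ u₀) (hu₁ : 0 ≤ u₁)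
    (hw₀ : 0 ≤ w₀) (hw₁ : 0 ≤ w₁) (z : ι → E)
    (h : ∀ θ : κ → ℝ, ∃ x : ι → E, ∑ i, u₀ i * ‖x i‖ ^ 2 ≤ ∑ j, w₀ j * θ j ^ 2 ∧
      ∑ i, u₁ i * ‖z i - x i‖ ^ 2 ≤ ∑ j, w₁ j * (1 - θ j) ^ 2) :
    ∑ i, u₀ i ^ s * u₁ i ^ (1 - s) * ‖z i‖ ^ 2 ≤ ∑ j, w₀ j ^ s * w₁ j ^ (1 - s) := by
  refine sum_mul_rpow_mul_rpow_le_of_parallelSum_le hs hu₀ hu₁ hw₀ hw₁ _ fun t ht => ?_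
  choose θ hθ using fun j => exists_sq_add_sq_eq_parallelSum (hw₀ j) (mul_nonneg ht.le (hw₁ j))
  obtain ⟨x, hx₀, hx₁⟩ := h θ
  calc ∑ i, parallelSum (u₀ i) (t * u₁ i) * ‖z i‖ ^ 2
      ≤ ∑ i, (u₀ i * ‖x i‖ ^ 2 + t * u₁ i * ‖z i - x i‖ ^ 2) := Finset.sum_le_sum fun i _ =>
        parallelSum_mul_sq_norm_le (hu₀ i) (mul_nonneg ht.le (hu₁ i)) _ _
    _ = ∑ i, u₀ i * ‖x i‖ ^ 2 + t * ∑ i, u₁ i * ‖z i - x i‖ ^ 2 := by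
        simp only [mul_assoc, Finset.sum_add_distrib, Finset.mul_sum]
    _ ≤ ∑ j, w₀ j * θ j ^ 2 + t * ∑ j, w₁ j * (1 - θ j) ^ 2 := by gcongr
    _ = ∑ j, parallelSum (w₀ j) (t * w₁ j) := by
        simp only [← hθ, mul_assoc, Finset.sum_add_distrib, Finset.mul_sum]

theorem sum_rpow_mul_rpow_le_rpow_sum_mul_rpow_sum {s : ℝ} (hs : s ∈ Ioo (0 : ℝ) 1)
    {u v : ι → ℝ} (hu : 0 ≤ u) (hv : 0 ≤ v) :
    ∑ i, u i ^ s * v i ^ (1 - s) ≤ (∑ i, u i) ^ s * (∑ i, v i) ^ (1 - s) := by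
  have hs' : 0 < 1 - s := sub_pos.2 hs.2
  have conj : (1 / s).HolderConjugate (1 / (1 - s)) := by
    rw [Real.holderConjugate_iff]
    exact ⟨(one_lt_div hs.1).2 hs.2, by simp⟩
  refine (Real.inner_le_Lp_mul_Lq_of_nonneg Finset.univ conj
    (fun i _ => Real.rpow_nonneg (hu i) s) (fun i _ => Real.rpow_nonneg (hv i) (1 - s))).trans_eq ?_
  simp only [one_div, inv_inv, Real.rpow_rpow_inv (hu _) hs.1.ne',
    Real.rpow_rpow_inv (hv _) hs'.ne']

theorem rpow_mul_rpow_one_sub_self {x : ℝ} (hx : 0 ≤ x) (s : ℝ) : x ^ s * x ^ (1 - s) = x := by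
  rw [← Real.rpow_add' hx (by norm_num), add_sub_cancel, Real.rpow_one]

theorem mul_rpow_mul_mul_rpow {a b c d : ℝ} (ha : 0 ≤ a) (hb : 0 ≤ b) (hc : 0 ≤ c) (hd : 0 ≤ d)
    (s t : ℝ) : (a * c) ^ s * (b * d) ^ t = a ^ s * b ^ t * (c ^ s * d ^ t) := by
  rw [Real.mul_rpow ha hc, Real.mul_rpow hb hd, mul_mul_mul_comm]

end Scalar

section TruncatedPower

/-- The power function used by `matPow` on eigenvalues: `x ^ t` for `x > 0`, and `0` otherwise. -/
noncomputable def truncPow (t x : ℝ) : ℝ := if 0 < x then x ^ t else 0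

theorem truncPow_of_pos {x : ℝ} (hx : 0 < x) (t : ℝ) : truncPow t x = x ^ t := if_pos hx

theorem truncPow_of_nonpos {x : ℝ} (hx : x ≤ 0) (t : ℝ) : truncPow t x = 0 := if_neg hx.not_gt

theorem truncPow_nonneg (t x : ℝ) : 0 ≤ truncPow t x := by
  unfold truncPow
  split_ifs <;> positivity

theorem truncPow_mul (a b x : ℝ) : truncPow a x * truncPow b x = truncPow (a + b) x := by
  rcases lt_or_ge 0 x with hx | hx
  · simp only [truncPow_of_pos hx, Real.rpow_add hx]
  · simp only [truncPow_of_nonpos hx, zero_mul]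

theorem truncPow_one {x : ℝ} (hx : 0 ≤ x) : truncPow 1 x = x := by
  rcases hx.eq_or_lt with rfl | hx
  · exact truncPow_of_nonpos le_rfl 1
  · rw [truncPow_of_pos hx, Real.rpow_one]

theorem truncPow_truncPow (a b x : ℝ) : truncPow b (truncPow a x) = truncPow (a * b) x := by
  rcases lt_or_ge 0 x with hx | hx
  · rw [truncPow_of_pos hx, truncPow_of_pos (Real.rpow_pos_of_pos hx a), truncPow_of_pos hx,
      Real.rpow_mul hx.le]
  · simp only [truncPow_of_nonpos hx, truncPow_of_nonpos le_rfl]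

theorem truncPow_rpow (a x : ℝ) {b : ℝ} (hb : b ≠ 0) : truncPow a x ^ b = truncPow (a * b) x := by
  rcases lt_or_ge 0 x with hx | hx
  · rw [truncPow_of_pos hx, truncPow_of_pos hx, Real.rpow_mul hx.le]
  · rw [truncPow_of_nonpos hx, truncPow_of_nonpos hx, Real.zero_rpow hb]

theorem monotone_truncPow {t : ℝ} (ht : 0 ≤ t) : Monotone (truncPow t) := fun x y hxy => by
  rcases lt_or_ge 0 x with hx | hx
  · rw [truncPow_of_pos hx, truncPow_of_pos (hx.trans_le hxy)]
    exact Real.rpow_le_rpow hx.le hxy ht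
  · rw [truncPow_of_nonpos hx]
    exact truncPow_nonneg t y

theorem continuous_truncPow_exponent (x : ℝ) : Continuous fun t => truncPow t x := by
  rcases lt_or_ge 0 x with hx | hx
  · simpa only [truncPow_of_pos hx] using Real.continuous_const_rpow hx.ne'
  · simpa only [truncPow_of_nonpos hx] using continuous_const

end TruncatedPower

section SpectralCalculus

theorem re_diag_conjTranspose_mul_mul_nonneg {n m : Type*} [Fintype n] [Finite m]
    {S : Matrix n n ℂ} (hS : S.PosSemidef) (U : Matrix n m ℂ) (i : m) : 0 ≤ ((Uᴴ * S * U) i i).re :=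
  (Complex.le_def.1 (hS.conjTranspose_mul_mul_same U).diag_nonneg).1

variable {n m : Type*} [Fintype n] [DecidableEq n] [Fintype m] [DecidableEq m]

/-- The matrix `U diag(f) Uᴴ` with real eigenvalues `f` in the eigenbasis `U`, as a ring
homomorphism in `f`. -/
noncomputable def conjDiagonal (U : unitaryGroup n ℂ) : (n → ℝ) →+* Matrix n n ℂ :=
  (RingHomClass.toRingHom (Unitary.conjStarAlgAut ℂ (Matrix n n ℂ) U)).comp
    ((diagonalRingHom n ℂ).comp (Complex.ofRealHom.compLeft n))

theorem conjDiagonal_apply (U : unitaryGroup n ℂ) (f : n → ℝ) :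
    conjDiagonal U f = U * diagonal (fun i => (f i : ℂ)) * (U : Matrix n n ℂ)ᴴ := rfl

theorem isHermitian_conjDiagonal (U : unitaryGroup n ℂ) (f : n → ℝ) :
    (conjDiagonal U f).IsHermitian :=
  isHermitian_mul_mul_conjTranspose _ <| isHermitian_diagonal_of_self_adjoint _ <|
    funext fun i => Complex.conj_ofReal (f i)

theorem posSemidef_conjDiagonal (U : unitaryGroup n ℂ) {f : n → ℝ} (hf : 0 ≤ f) :
    (conjDiagonal U f).PosSemidef :=
  (PosSemidef.diagonal fun i => Complex.zero_le_real.2 (hf i)).mul_mul_conjTranspose_same _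

theorem matPow_eq_conjDiagonal {M : Matrix n n ℂ} (hM : M.IsHermitian) (t : ℝ) :
    matPow M t = conjDiagonal hM.eigenvectorUnitary fun i => truncPow t (hM.eigenvalues i) :=
  dif_pos hM

theorem matPow_eq_cfc {M : Matrix n n ℂ} (hM : M.IsHermitian) (t : ℝ) :
    matPow M t = cfc (truncPow t) M := by
  rw [matPow_eq_conjDiagonal hM, hM.cfc_eq]
  rfl

theorem posSemidef_matPow {M : Matrix n n ℂ} (hM : M.IsHermitian) (t : ℝ) :
    (matPow M t).PosSemidef := by
  rw [matPow_eq_conjDiagonal hM]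
  exact posSemidef_conjDiagonal _ fun i => truncPow_nonneg t _

theorem conjTranspose_matPow {M : Matrix n n ℂ} (hM : M.IsHermitian) (t : ℝ) :
    (matPow M t)ᴴ = matPow M t :=
  (posSemidef_matPow hM t).1

theorem matPow_mul_matPow {M : Matrix n n ℂ} (hM : M.IsHermitian) (a b : ℝ) :
    matPow M a * matPow M b = matPow M (a + b) := by
  simp only [matPow_eq_conjDiagonal hM, ← map_mul, ← truncPow_mul]
  rfl

theorem matPow_mul_matPow_mul {k : Type*} {M : Matrix n n ℂ} (hM : M.IsHermitian) (a b : ℝ)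
    (X : Matrix n k ℂ) : matPow M a * (matPow M b * X) = matPow M (a + b) * X := by
  rw [← Matrix.mul_assoc, matPow_mul_matPow hM]

theorem matPow_one {M : Matrix n n ℂ} (hM : M.PosSemidef) : matPow M 1 = M := by
  rw [matPow_eq_conjDiagonal hM.1]
  simp only [truncPow_one (hM.eigenvalues_nonneg _)]
  exact hM.1.spectral_theorem.symm

theorem matPow_matPow {M : Matrix n n ℂ} (hM : M.IsHermitian) (a b : ℝ) :
    matPow (matPow M a) b = matPow M (a * b) := by
  have spec := finite_real_spectrum (A := M)
  rw [matPow_eq_cfc (posSemidef_matPow hM a).1, matPow_eq_cfc hM, matPow_eq_cfc hM,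
    ← cfc_comp' (truncPow b) (truncPow a) M ((spec.image _).continuousOn _)
      (spec.continuousOn _) hM.isSelfAdjoint]
  simp only [truncPow_truncPow]

theorem matPow_map (φ : Matrix n n ℂ →⋆ₐ[ℂ] Matrix m m ℂ) {M : Matrix n n ℂ}
    (hM : M.IsHermitian) (t : ℝ) : matPow (φ M) t = φ (matPow M t) := by
  have hφM : (φ M).IsHermitian := hM.isSelfAdjoint.map φ
  have hφ : Continuous φ := φ.toLinearMap.continuous_of_finiteDimensional
  rw [matPow_eq_cfc hφM, matPow_eq_cfc hM]
  exact (StarAlgHomClass.map_cfc φ _ M (finite_real_spectrum.continuousOn _) hφ hM hφM).symm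

theorem trace_conjDiagonal_mul (U : unitaryGroup n ℂ) (f : n → ℝ) (S : Matrix n n ℂ) :
    (conjDiagonal U f * S).trace.re =
      ∑ i, f i * (((U : Matrix n n ℂ)ᴴ * S * (U : Matrix n n ℂ)) i i).re := by
  rw [conjDiagonal_apply, Matrix.mul_assoc, Matrix.mul_assoc, trace_mul_comm, Matrix.mul_assoc]
  simp only [trace, diag, diagonal_mul, Complex.re_sum, Complex.re_ofReal_mul]

theorem trace_conjDiagonal_mul_conjDiagonal (U : unitaryGroup m ℂ) (W : unitaryGroup n ℂ)
    (f : m → ℝ) (g : n → ℝ) (X : Matrix m n ℂ) :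
    (conjDiagonal U f * X * conjDiagonal W g * Xᴴ).trace.re =
      ∑ p : m × n, f p.1 * g p.2 *
        ‖((U : Matrix m m ℂ)ᴴ * X * (W : Matrix n n ℂ)) p.1 p.2‖ ^ 2 := by
  set Y := (U : Matrix m m ℂ)ᴴ * X * (W : Matrix n n ℂ) with hY
  have conj : (U : Matrix m m ℂ)ᴴ * (X * conjDiagonal W g * Xᴴ) * (U : Matrix m m ℂ) =
      Y * diagonal (fun i => (g i : ℂ)) * Yᴴ := by
    simp only [hY, conjDiagonal_apply, conjTranspose_mul, conjTranspose_conjTranspose,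
      Matrix.mul_assoc]
  have entry (i : m) : ((Y * diagonal (fun i => (g i : ℂ)) * Yᴴ) i i).re =
      ∑ j, g j * ‖Y i j‖ ^ 2 := by
    rw [Matrix.mul_apply, Complex.re_sum]
    refine Finset.sum_congr rfl fun j _ => ?_
    rw [mul_diagonal, conjTranspose_apply, mul_right_comm, Complex.star_def, Complex.mul_conj']
    norm_cast
    exact mul_comm _ _
  rw [Matrix.mul_assoc (conjDiagonal U f * X), Matrix.mul_assoc, ← Matrix.mul_assoc X,
    trace_conjDiagonal_mul, Fintype.sum_prod_type]
  simp only [conj, entry, Finset.mul_sum, mul_assoc]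

theorem continuous_trace_matPow_mul {M : Matrix n n ℂ} (hM : M.IsHermitian) (S : Matrix n n ℂ) :
    Continuous fun t => (matPow M t * S).trace.re := by
  simp only [matPow_eq_conjDiagonal hM, trace_conjDiagonal_mul]
  exact continuous_finsetSum _ fun i _ => (continuous_truncPow_exponent _).mul continuous_const

end SpectralCalculus

section GeometricMean

variable {n m : Type*} [Fintype n] [DecidableEq n] [Fintype m] [DecidableEq m]

/-- `M` is the weighted geometric mean `M₀^s M₁^(1-s)` of two commuting positive semidefinite
matrices, presented in a common eigenbasis. -/
def IsGeomMean (s : ℝ) (M₀ M₁ M : Matrix n n ℂ) : Prop :=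
  ∃ (U : unitaryGroup n ℂ) (f₀ f₁ : n → ℝ), 0 ≤ f₀ ∧ 0 ≤ f₁ ∧
    M₀ = conjDiagonal U f₀ ∧ M₁ = conjDiagonal U f₁ ∧
    M = conjDiagonal U fun i => f₀ i ^ s * f₁ i ^ (1 - s)

variable {s : ℝ}

theorem isGeomMean_matPow (hs : s ∈ Set.Ioo (0 : ℝ) 1) {M : Matrix n n ℂ} (hM : M.IsHermitian)
    {x y z : ℝ} (hz : s * x + (1 - s) * y = z) :
    IsGeomMean s (matPow M x) (matPow M y) (matPow M z) := by
  refine ⟨_, _, _, fun i => truncPow_nonneg x _, fun i => truncPow_nonneg y _,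
    matPow_eq_conjDiagonal hM x, matPow_eq_conjDiagonal hM y, ?_⟩
  simp only [truncPow_rpow _ _ hs.1.ne', truncPow_rpow _ _ (sub_pos.2 hs.2).ne', truncPow_mul,
    mul_comm _ s, mul_comm _ (1 - s), hz, matPow_eq_conjDiagonal hM z]

theorem isGeomMean_one_matPow (hs : s < 1) {M : Matrix n n ℂ}
    (hM : M.IsHermitian) {y z : ℝ} (hz : (1 - s) * y = z) :
    IsGeomMean s 1 (matPow M y) (matPow M z) := by
  refine ⟨_, 1, _, zero_le_one, fun i => truncPow_nonneg y _, (map_one _).symm,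
    matPow_eq_conjDiagonal hM y, ?_⟩
  simp only [Pi.one_apply, Real.one_rpow, one_mul, truncPow_rpow _ _ (sub_pos.2 hs).ne',
    mul_comm _ (1 - s), hz, matPow_eq_conjDiagonal hM z]

theorem isGeomMean_matPow_one (hs : 0 < s) {M : Matrix n n ℂ}
    (hM : M.IsHermitian) {x z : ℝ} (hz : s * x = z) :
    IsGeomMean s (matPow M x) 1 (matPow M z) := by
  refine ⟨_, _, 1, fun i => truncPow_nonneg x _, zero_le_one, matPow_eq_conjDiagonal hM x,
    (map_one _).symm, ?_⟩
  simp only [Pi.one_apply, Real.one_rpow, mul_one, truncPow_rpow _ _ hs.ne', mul_comm _ s, hz,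
    matPow_eq_conjDiagonal hM z]

theorem isGeomMean_self_one (hs : 0 < s) {M : Matrix n n ℂ} (hM : M.PosSemidef) :
    IsGeomMean s M 1 (matPow M s) := by
  simpa only [matPow_one hM] using isGeomMean_matPow_one hs hM.1 (mul_one s)

theorem IsGeomMean.exists_trace_eq_sum {F₀ F₁ F : Matrix m m ℂ} {G₀ G₁ G : Matrix n n ℂ}
    (hF : IsGeomMean s F₀ F₁ F) (hG : IsGeomMean s G₀ G₁ G) :
    ∃ (u₀ u₁ : m × n → ℝ) (L : Matrix m n ℂ →+ (m × n → ℂ)), 0 ≤ u₀ ∧ 0 ≤ u₁ ∧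
      (∀ X, (F₀ * X * G₀ * Xᴴ).trace.re = ∑ p, u₀ p * ‖L X p‖ ^ 2) ∧
      (∀ X, (F₁ * X * G₁ * Xᴴ).trace.re = ∑ p, u₁ p * ‖L X p‖ ^ 2) ∧
      (∀ X, (F * X * G * Xᴴ).trace.re = ∑ p, u₀ p ^ s * u₁ p ^ (1 - s) * ‖L X p‖ ^ 2) := by
  obtain ⟨U, f₀, f₁, hf₀, hf₁, rfl, rfl, rfl⟩ := hF
  obtain ⟨W, g₀, g₁, hg₀, hg₁, rfl, rfl, rfl⟩ := hG
  refine ⟨fun p => f₀ p.1 * g₀ p.2, fun p => f₁ p.1 * g₁ p.2,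
    { toFun := fun X p => ((U : Matrix m m ℂ)ᴴ * X * (W : Matrix n n ℂ)) p.1 p.2
      map_zero' := by ext; simp
      map_add' := fun X Y => by ext; simp [Matrix.mul_add, Matrix.add_mul] },
    fun p => mul_nonneg (hf₀ _) (hg₀ _), fun p => mul_nonneg (hf₁ _) (hg₁ _),
    trace_conjDiagonal_mul_conjDiagonal U W f₀ g₀, trace_conjDiagonal_mul_conjDiagonal U W f₁ g₁,
    fun X => ?_⟩
  simp only [trace_conjDiagonal_mul_conjDiagonal,
    mul_rpow_mul_mul_rpow (hf₀ _) (hf₁ _) (hg₀ _) (hg₁ _)]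
  rfl

theorem IsGeomMean.trace_le_rpow_mul_rpow (hs : s ∈ Set.Ioo (0 : ℝ) 1)
    {F₀ F₁ F : Matrix m m ℂ} {G₀ G₁ G : Matrix n n ℂ}
    (hF : IsGeomMean s F₀ F₁ F) (hG : IsGeomMean s G₀ G₁ G) (X : Matrix m n ℂ) :
    (F * X * G * Xᴴ).trace.re ≤
      (F₀ * X * G₀ * Xᴴ).trace.re ^ s * (F₁ * X * G₁ * Xᴴ).trace.re ^ (1 - s) := by
  obtain ⟨u₀, u₁, L, hu₀, hu₁, h₀, h₁, h⟩ := hF.exists_trace_eq_sum hG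
  have split (p : m × n) : u₀ p ^ s * u₁ p ^ (1 - s) * ‖L X p‖ ^ 2 =
      (u₀ p * ‖L X p‖ ^ 2) ^ s * (u₁ p * ‖L X p‖ ^ 2) ^ (1 - s) := by
    rw [mul_rpow_mul_mul_rpow (hu₀ p) (hu₁ p) (sq_nonneg _) (sq_nonneg _),
      rpow_mul_rpow_one_sub_self (sq_nonneg _)]
  rw [h₀, h₁, h]
  simp only [split]
  exact sum_rpow_mul_rpow_le_rpow_sum_mul_rpow_sum hs
    (fun p => mul_nonneg (hu₀ p) (sq_nonneg _)) (fun p => mul_nonneg (hu₁ p) (sq_nonneg _))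

end GeometricMean

section Interpolation

variable {n m k : Type*} [Fintype n] [DecidableEq n] [Fintype m] [DecidableEq m]
  [Fintype k] [DecidableEq k] {s : ℝ}

theorem trace_conjDiagonal_sandwich (U : unitaryGroup n ℂ) (f θ : n → ℝ) (S : Matrix n n ℂ) :
    (conjDiagonal U f * conjDiagonal U θ * S * conjDiagonal U θ).trace.re =
      ∑ i, f i * (((U : Matrix n n ℂ)ᴴ * S * (U : Matrix n n ℂ)) i i).re * θ i ^ 2 := by
  rw [trace_mul_comm, ← Matrix.mul_assoc, ← map_mul, ← map_mul, trace_conjDiagonal_mul]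
  refine Finset.sum_congr rfl fun i _ => ?_
  simp only [Pi.mul_apply]
  ring

theorem IsGeomMean.trace_le_sum_of_forall_exists (hs : s ∈ Set.Ioo (0 : ℝ) 1)
    {F₀ F₁ F : Matrix m m ℂ} {G₀ G₁ G : Matrix k k ℂ}
    (hF : IsGeomMean s F₀ F₁ F) (hG : IsGeomMean s G₀ G₁ G) (V : Matrix m k ℂ)
    (U : unitaryGroup n ℂ) {f₀ f₁ : n → ℝ} (hf₀ : 0 ≤ f₀) (hf₁ : 0 ≤ f₁)
    {S₀ S₁ : Matrix n n ℂ} (hS₀ : S₀.PosSemidef) (hS₁ : S₁.PosSemidef)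
    (h : ∀ θ : n → ℝ, ∃ X : Matrix m k ℂ,
      (F₀ * X * G₀ * Xᴴ).trace.re ≤
        (conjDiagonal U f₀ * conjDiagonal U θ * S₀ * conjDiagonal U θ).trace.re ∧
      (F₁ * (V - X) * G₁ * (V - X)ᴴ).trace.re ≤
        (conjDiagonal U f₁ * (1 - conjDiagonal U θ) * S₁ * (1 - conjDiagonal U θ)).trace.re) :
    (F * V * G * Vᴴ).trace.re ≤
      ∑ i, (f₀ i * (((U : Matrix n n ℂ)ᴴ * S₀ * (U : Matrix n n ℂ)) i i).re) ^ s *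
        (f₁ i * (((U : Matrix n n ℂ)ᴴ * S₁ * (U : Matrix n n ℂ)) i i).re) ^ (1 - s) := by
  obtain ⟨u₀, u₁, L, hu₀, hu₁, h₀, h₁, hV⟩ := hF.exists_trace_eq_sum hG
  rw [hV]
  refine sum_rpow_mul_rpow_mul_sq_norm_le hs hu₀ hu₁
    (fun i => mul_nonneg (hf₀ i) (re_diag_conjTranspose_mul_mul_nonneg hS₀ _ i))
    (fun i => mul_nonneg (hf₁ i) (re_diag_conjTranspose_mul_mul_nonneg hS₁ _ i)) _ fun θ => ?_
  obtain ⟨X, hX₀, hX₁⟩ := h θ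
  rw [h₀, trace_conjDiagonal_sandwich] at hX₀
  rw [h₁, ← map_one (conjDiagonal U), ← map_sub, trace_conjDiagonal_sandwich, map_sub] at hX₁
  exact ⟨L X, hX₀, hX₁⟩

theorem IsGeomMean.trace_mul_le_of_forall_exists (hs : s ∈ Set.Ioo (0 : ℝ) 1)
    {F₀ F₁ F G₀ G₁ G : Matrix m m ℂ} {K₀ K₁ K S : Matrix n n ℂ}
    (hF : IsGeomMean s F₀ F₁ F) (hG : IsGeomMean s G₀ G₁ G) (hK : IsGeomMean s K₀ K₁ K)
    (hS : S.PosSemidef)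
    (h : ∀ Θ : Matrix n n ℂ, Θ.IsHermitian → ∃ X : Matrix m m ℂ,
      (F₀ * X * G₀ * Xᴴ).trace.re ≤ (K₀ * Θ * S * Θ).trace.re ∧
      (F₁ * (1 - X) * G₁ * (1 - X)ᴴ).trace.re ≤ (K₁ * (1 - Θ) * S * (1 - Θ)).trace.re) :
    (F * G).trace.re ≤ (K * S).trace.re := by
  obtain ⟨U, f₀, f₁, hf₀, hf₁, rfl, rfl, rfl⟩ := hK
  have interp := hF.trace_le_sum_of_forall_exists hs hG 1 U hf₀ hf₁ hS hS
    fun θ => h _ (isHermitian_conjDiagonal U θ)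
  rw [Matrix.mul_one, conjTranspose_one, Matrix.mul_one] at interp
  refine interp.trans_eq ?_
  rw [trace_conjDiagonal_mul]
  refine Finset.sum_congr rfl fun i _ => ?_
  have hSi := re_diag_conjTranspose_mul_mul_nonneg hS (U : Matrix n n ℂ) i
  rw [mul_rpow_mul_mul_rpow (hf₀ i) (hf₁ i) hSi hSi, rpow_mul_rpow_one_sub_self hSi]

theorem IsGeomMean.trace_mul_le_rpow_mul_rpow_of_forall_exists (hs : s ∈ Set.Ioo (0 : ℝ) 1)
    {F₀ F₁ F G₀ G₁ G : Matrix m m ℂ} {P S₀ S₁ : Matrix n n ℂ} {x₀ x₁ y₀ y₁ : ℝ}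
    (hF : IsGeomMean s F₀ F₁ F) (hG : IsGeomMean s G₀ G₁ G) (hP : P.IsHermitian)
    (hS₀ : S₀.PosSemidef) (hS₁ : S₁.PosSemidef)
    (hxy : s * x₀ + (1 - s) * x₁ = s * y₀ + (1 - s) * y₁)
    (h : ∀ Θ : Matrix n n ℂ, Θ.IsHermitian → (∀ t, Commute Θ (matPow P t)) →
      ∃ X : Matrix m m ℂ,
        (F₀ * X * G₀ * Xᴴ).trace.re ≤ (matPow P x₀ * Θ * S₀ * Θ).trace.re ∧
        (F₁ * (1 - X) * G₁ * (1 - X)ᴴ).trace.re ≤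
          (matPow P x₁ * (1 - Θ) * S₁ * (1 - Θ)).trace.re) :
    (F * G).trace.re ≤
      (matPow P y₀ * S₀).trace.re ^ s * (matPow P y₁ * S₁).trace.re ^ (1 - s) := by
  simp only [matPow_eq_conjDiagonal hP] at h ⊢
  have interp := hF.trace_le_sum_of_forall_exists hs hG 1 hP.eigenvectorUnitary
    (fun i => truncPow_nonneg x₀ (hP.eigenvalues i)) (fun i => truncPow_nonneg x₁ _) hS₀ hS₁
    fun θ => h _ (isHermitian_conjDiagonal _ θ) fun t => (Commute.all θ _).map _
  rw [Matrix.mul_one, conjTranspose_one, Matrix.mul_one] at interp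
  simp only [trace_conjDiagonal_mul]
  set d₀ := fun i => re_diag_conjTranspose_mul_mul_nonneg hS₀
    (hP.eigenvectorUnitary : Matrix n n ℂ) i
  set d₁ := fun i => re_diag_conjTranspose_mul_mul_nonneg hS₁
    (hP.eigenvectorUnitary : Matrix n n ℂ) i
  refine (interp.trans_eq ?_).trans (sum_rpow_mul_rpow_le_rpow_sum_mul_rpow_sum hs
    (fun i => mul_nonneg (truncPow_nonneg _ _) (d₀ i))
    (fun i => mul_nonneg (truncPow_nonneg _ _) (d₁ i)))
  refine Finset.sum_congr rfl fun i _ => ?_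
  simp only [mul_rpow_mul_mul_rpow (truncPow_nonneg _ _) (truncPow_nonneg _ _) (d₀ i) (d₁ i),
    truncPow_rpow _ _ hs.1.ne', truncPow_rpow _ _ (sub_pos.2 hs.2).ne', truncPow_mul,
    mul_comm _ s, mul_comm _ (1 - s), hxy]

end Interpolation

section PartialTrace

variable {n m : Type*} [Fintype n] [Fintype m]

theorem conjTranspose_ptraceFst (X : Matrix (m × n) (m × n) ℂ) :
    (ptraceFst X)ᴴ = ptraceFst Xᴴ := by
  ext j j'
  simp [ptraceFst]

theorem ptraceFst_sub (X Y : Matrix (m × n) (m × n) ℂ) :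
    ptraceFst (X - Y) = ptraceFst X - ptraceFst Y := by
  ext j j'
  simp [ptraceFst]

theorem isHermitian_ptraceFst_mul {A Y : Matrix (m × n) (m × n) ℂ} (hA : A.IsHermitian)
    (hY : Y.IsHermitian) (hYA : Commute Y A) : (ptraceFst (Y * A)).IsHermitian := by
  rw [IsHermitian, conjTranspose_ptraceFst, conjTranspose_mul, hA.eq, hY.eq, hYA.eq]

theorem trace_ptraceFst (X : Matrix (m × n) (m × n) ℂ) : (ptraceFst X).trace = X.trace := by
  simp only [ptraceFst, trace, diag, of_apply, Fintype.sum_prod_type]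
  exact Finset.sum_comm

theorem posSemidef_ptraceFst {X : Matrix (m × n) (m × n) ℂ} (hX : X.PosSemidef) :
    (ptraceFst X).PosSemidef := by
  have sum_blocks : ptraceFst X = ∑ i, X.submatrix (fun j => (i, j)) fun j => (i, j) := by
    ext j j'
    simp [ptraceFst, Matrix.sum_apply]
  rw [sum_blocks]
  exact posSemidef_sum _ fun i _ => hX.submatrix _

theorem ptraceFst_ne_zero {X : Matrix (m × n) (m × n) ℂ} (hX : X.PosSemidef) (hX0 : X ≠ 0) :
    ptraceFst X ≠ 0 := fun h => hX0 <| hX.trace_eq_zero_iff.1 <| by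
  rw [← trace_ptraceFst, h, trace_zero]

variable [DecidableEq n] [DecidableEq m]

/-- The embedding `M ↦ I ⊗ M` of the algebra of the second tensor factor. -/
noncomputable def ampliation (m : Type*) [Fintype m] [DecidableEq m] :
    Matrix n n ℂ →⋆ₐ[ℂ] Matrix (m × n) (m × n) ℂ where
  toFun M := (1 : Matrix m m ℂ) ⊗ₖ M
  map_one' := one_kronecker_one
  map_mul' M N := by rw [← mul_kronecker_mul, Matrix.one_mul]
  map_zero' := kronecker_zero _
  map_add' := kronecker_add _
  commutes' r := by
    simp only [Algebra.algebraMap_eq_smul_one, kronecker_smul, one_kronecker_one]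
  map_star' M := by simp only [star_eq_conjTranspose, conjTranspose_kronecker, conjTranspose_one]

theorem conjTranspose_ampliation (M : Matrix n n ℂ) :
    (ampliation m M)ᴴ = ampliation m Mᴴ :=
  (map_star (ampliation m) M).symm

theorem isHermitian_ampliation {E : Matrix n n ℂ} (hE : E.IsHermitian) :
    (ampliation m E).IsHermitian :=
  (conjTranspose_ampliation E).trans (congrArg _ hE)

theorem posSemidef_ampliation {M : Matrix n n ℂ} (hM : M.PosSemidef) :
    (ampliation m M).PosSemidef :=
  PosSemidef.one.kronecker hM

theorem ptraceFst_ampliation_mul (M : Matrix n n ℂ) (X : Matrix (m × n) (m × n) ℂ) :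
    ptraceFst (ampliation m M * X) = M * ptraceFst X := by
  ext j j'
  have entry (i : m) : (ampliation m M * X) (i, j) (i, j') = ∑ l, M j l * X (i, l) (i, j') := by
    simp [ampliation, Matrix.mul_apply, Fintype.sum_prod_type, kroneckerMap_apply, one_apply,
      ite_mul, Finset.sum_ite_irrel]
  simp only [ptraceFst, of_apply, entry]
  simp only [Matrix.mul_apply, of_apply, Finset.mul_sum]
  exact Finset.sum_comm

theorem ptraceFst_mul_ampliation (M : Matrix n n ℂ) (X : Matrix (m × n) (m × n) ℂ) :
    ptraceFst (X * ampliation m M) = ptraceFst X * M := by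
  apply conjTranspose_injective
  rw [conjTranspose_ptraceFst, conjTranspose_mul, conjTranspose_ampliation,
    ptraceFst_ampliation_mul, conjTranspose_mul, conjTranspose_ptraceFst]

theorem trace_ampliation_mul (M : Matrix n n ℂ) (X : Matrix (m × n) (m × n) ℂ) :
    (ampliation m M * X).trace = (M * ptraceFst X).trace := by
  rw [← trace_ptraceFst, ptraceFst_ampliation_mul]

theorem trace_ampliation_sandwich (M Θ : Matrix n n ℂ) (Y : Matrix (m × n) (m × n) ℂ) :
    (ampliation m M * ampliation m Θ * Y * (ampliation m Θ)ᴴ).trace =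
      (M * Θ * ptraceFst Y * Θᴴ).trace := by
  rw [conjTranspose_ampliation, ← map_mul, Matrix.mul_assoc, trace_ampliation_mul,
    ptraceFst_mul_ampliation, ← Matrix.mul_assoc]

end PartialTrace

section Support

theorem re_trace_nonneg {n : Type*} [Fintype n] {M : Matrix n n ℂ} (hM : M.PosSemidef) :
    0 ≤ M.trace.re :=
  (Complex.le_def.1 hM.trace_nonneg).1

variable {n m : Type*} [Fintype n] [DecidableEq n] [Fintype m] [DecidableEq m]

theorem matPow_half_mul_matPow_half {M : Matrix n n ℂ} (hM : M.IsHermitian) (t : ℝ) :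
    matPow M (t / 2) * matPow M (t / 2) = matPow M t := by
  rw [matPow_mul_matPow hM, add_halves]

theorem posSemidef_matPow_mul_mul_matPow {M N : Matrix n n ℂ} (hM : M.IsHermitian)
    (hN : N.PosSemidef) (t : ℝ) : (matPow M t * N * matPow M t).PosSemidef := by
  simpa only [conjTranspose_matPow hM] using hN.mul_mul_conjTranspose_same (matPow M t)

theorem re_trace_mul_nonneg {n : Type*} [Fintype n] {M N : Matrix n n ℂ} (hM : M.PosSemidef)
    (hN : N.PosSemidef) : 0 ≤ (M * N).trace.re := by
  classical
  have hsandwich := re_trace_nonneg (posSemidef_matPow_mul_mul_matPow hM.1 hN (1 / 2))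
  rwa [trace_mul_comm, ← Matrix.mul_assoc, matPow_half_mul_matPow_half hM.1,
    matPow_one hM] at hsandwich

theorem posSemidef_one_sub_matPow_zero {M : Matrix n n ℂ} (hM : M.IsHermitian) :
    (1 - matPow M 0).PosSemidef := by
  rw [matPow_eq_conjDiagonal hM, ← map_one (conjDiagonal hM.eigenvectorUnitary), ← map_sub]
  refine posSemidef_conjDiagonal _ fun i => sub_nonneg.2 ?_
  change truncPow 0 _ ≤ 1
  unfold truncPow
  split_ifs <;> simp

theorem matPow_zero_mul_self {M : Matrix n n ℂ} (hM : M.PosSemidef) : matPow M 0 * M = M := by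
  have h := matPow_mul_matPow hM.1 0 1
  rwa [zero_add, matPow_one hM] at h

theorem matPow_zero_mul_sandwich {P Θ S : Matrix n n ℂ} (hΘ : Commute Θ (matPow P 0))
    (h : matPow P 0 * S = S) : matPow P 0 * Θ * S * Θ = Θ * S * Θ := by
  rw [← hΘ.eq, Matrix.mul_assoc Θ, h]

theorem trace_matPow_zero_mul_le {M N : Matrix n n ℂ} (hM : M.IsHermitian) (hN : N.PosSemidef) :
    (matPow M 0 * N).trace.re ≤ N.trace.re := by
  have h := re_trace_mul_nonneg (posSemidef_one_sub_matPow_zero hM) hN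
  rwa [Matrix.sub_mul, Matrix.one_mul, trace_sub, Complex.sub_re, sub_nonneg] at h

theorem mul_matPow_of_mul_eq_self {M Q : Matrix n n ℂ} (hM : M.PosSemidef) (h : Q * M = M)
    (t : ℝ) : Q * matPow M t = matPow M t := by
  have factor : matPow M t = M * matPow M (t - 1) := by
    nth_rw 2 [← matPow_one hM]
    rw [matPow_mul_matPow hM.1, add_sub_cancel]
  rw [factor, ← Matrix.mul_assoc, h]

theorem mul_eq_self_of_isHermitian {n : Type*} [Fintype n] {M Q : Matrix n n ℂ}
    (hM : M.IsHermitian) (hQ : Q.IsHermitian) (h : Q * M = M) : M * Q = M := by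
  simpa only [conjTranspose_mul, hM.eq, hQ.eq] using congrArg conjTranspose h

theorem ampliation_matPow_zero_ptraceFst_mul {A : Matrix (m × n) (m × n) ℂ}
    (hA : A.PosSemidef) : ampliation m (matPow (ptraceFst A) 0) * A = A := by
  have hB := posSemidef_ptraceFst hA
  set Q := 1 - matPow (ptraceFst A) 0 with hQ
  have hQB : Q * ptraceFst A = 0 := by
    rw [hQ, Matrix.sub_mul, Matrix.one_mul, matPow_zero_mul_self hB, sub_self]
  have hQA : ampliation m Q * matPow A (1 / 2) = 0 := by
    rw [← trace_mul_conjTranspose_self_eq_zero_iff, conjTranspose_mul, conjTranspose_matPow hA.1,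
      Matrix.mul_assoc, matPow_mul_matPow_mul hA.1, add_halves, matPow_one hA,
      conjTranspose_ampliation, trace_ampliation_mul, ptraceFst_mul_ampliation,
      ← Matrix.mul_assoc, hQB, Matrix.zero_mul, trace_zero]
  have hQA' : ampliation m Q * A = 0 := by
    rw [← matPow_one hA, ← matPow_half_mul_matPow_half hA.1, ← Matrix.mul_assoc, hQA,
      Matrix.zero_mul]
  rw [hQ, map_sub, map_one, Matrix.sub_mul, Matrix.one_mul, sub_eq_zero] at hQA'
  exact hQA'.symm

theorem ampliation_mul_of_mul_ptraceFst {A : Matrix (m × n) (m × n) ℂ} (hA : A.PosSemidef)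
    {Q : Matrix n n ℂ} (h : Q * ptraceFst A = ptraceFst A) : ampliation m Q * A = A := by
  have hsupp := ampliation_matPow_zero_ptraceFst_mul hA
  conv_lhs => rw [← hsupp, ← Matrix.mul_assoc, ← map_mul,
    mul_matPow_of_mul_eq_self (posSemidef_ptraceFst hA) h, hsupp]

theorem mul_ptraceFst_matPow_of_mul_ptraceFst {A : Matrix (m × n) (m × n) ℂ}
    (hA : A.PosSemidef) {Q : Matrix n n ℂ} (h : Q * ptraceFst A = ptraceFst A) (t : ℝ) :
    Q * ptraceFst (matPow A t) = ptraceFst (matPow A t) := by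
  rw [← ptraceFst_ampliation_mul,
    mul_matPow_of_mul_eq_self hA (ampliation_mul_of_mul_ptraceFst hA h)]

theorem trace_matPow_mul_matPow_pos {M N : Matrix n n ℂ} (hM : M.PosSemidef)
    (hN : N.IsHermitian) (hM0 : M ≠ 0) (h : matPow N 0 * M = M) (x y : ℝ) :
    0 < (matPow M x * matPow N y).trace.re := by
  set Z := matPow M (x / 2) * matPow N (y / 2) with hZ
  have trace_eq : (matPow M x * matPow N y).trace = (Zᴴ * Z).trace := by
    rw [hZ, conjTranspose_mul, conjTranspose_matPow hM.1, conjTranspose_matPow hN,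
      Matrix.mul_assoc, matPow_mul_matPow_mul hM.1, add_halves, trace_mul_comm (matPow N _),
      Matrix.mul_assoc, matPow_half_mul_matPow_half hN]
  have hZ0 : Z ≠ 0 := fun hZ0 => hM0 <| by
    have hMN : matPow M (x / 2) * matPow N 0 = matPow M (x / 2) :=
      mul_eq_self_of_isHermitian (posSemidef_matPow hM.1 _).1 (posSemidef_matPow hN _).1
        (mul_matPow_of_mul_eq_self hM h _)
    have half_zero : matPow M (x / 2) = 0 := by
      rw [← hMN, ← add_neg_cancel (y / 2), ← matPow_mul_matPow hN, ← Matrix.mul_assoc, ← hZ, hZ0,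
        Matrix.zero_mul]
    rw [← matPow_one hM, ← add_sub_cancel (x / 2) 1, ← matPow_mul_matPow hM.1, half_zero,
      Matrix.zero_mul]
  have nonneg := (posSemidef_conjTranspose_mul_self Z).trace_nonneg
  have ne : (Zᴴ * Z).trace ≠ 0 := trace_conjTranspose_mul_self_eq_zero_iff.not.2 hZ0
  rw [trace_eq]
  exact (Complex.lt_def.1 (nonneg.lt_of_ne' ne)).1

end Support

section TraceInequalities

variable {n m : Type*} [Fintype n] [DecidableEq n] [Fintype m] [DecidableEq m]

theorem trace_mul_mul_mul_comm {n m : Type*} [Fintype n] [Fintype m] (P : Matrix n n ℂ)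
    (X : Matrix n m ℂ) (Q : Matrix m m ℂ) (Y : Matrix m n ℂ) :
    (P * X * Q * Y).trace = (Q * Y * P * X).trace := by
  rw [Matrix.mul_assoc, trace_mul_comm, ← Matrix.mul_assoc]

theorem mul_matPow_mul_conjTranspose {k : Type*} {M : Matrix n n ℂ} (hM : M.IsHermitian) (t : ℝ)
    (X : Matrix k n ℂ) :
    X * matPow M t * Xᴴ = (X * matPow M (t / 2)) * (X * matPow M (t / 2))ᴴ := by
  rw [conjTranspose_mul, conjTranspose_matPow hM, Matrix.mul_assoc X, Matrix.mul_assoc X,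
    matPow_mul_matPow_mul hM, add_halves]

theorem trace_conjDiagonal_mul_mul_le_of_monovary (U : unitaryGroup n ℂ) {f g : n → ℝ}
    (hfg : Monovary f g) {H : Matrix n n ℂ} (hH : H.IsHermitian) :
    (conjDiagonal U f * H * conjDiagonal U g * H).trace.re ≤
      (H * conjDiagonal U (f * g) * H).trace.re := by
  set c : n → n → ℝ := fun i j => ‖((U : Matrix n n ℂ)ᴴ * H * (U : Matrix n n ℂ)) i j‖ ^ 2 with hc
  have c_symm (i j : n) : c j i = c i j := by
    simp only [hc]
    rw [← (isHermitian_conjTranspose_mul_mul (U : Matrix n n ℂ) hH).apply i j, norm_star]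
  have expand (f g : n → ℝ) : (conjDiagonal U f * H * conjDiagonal U g * H).trace.re =
      ∑ i, ∑ j, f i * g j * c i j := by
    simpa only [hH.eq, Fintype.sum_prod_type] using trace_conjDiagonal_mul_conjDiagonal U U f g H
  have expand_right : (H * conjDiagonal U (f * g) * H).trace.re =
      ∑ i, ∑ j, f i * g i * c i j := by
    rw [Matrix.mul_assoc, trace_mul_comm, ← Matrix.mul_one (conjDiagonal U (f * g) * H),
      ← map_one (conjDiagonal U), expand]
    simp only [Pi.mul_apply, Pi.one_apply, mul_one]
  have swap (F : n → n → ℝ) : ∑ i, ∑ j, F j i * c i j = ∑ i, ∑ j, F i j * c i j := by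
    rw [Finset.sum_comm]
    simp only [c_symm]
  have double : ∑ i, ∑ j, (f i * g j + f j * g i) * c i j ≤
      ∑ i, ∑ j, (f i * g i + f j * g j) * c i j := by
    refine Finset.sum_le_sum fun i _ => Finset.sum_le_sum fun j _ => ?_
    exact mul_le_mul_of_nonneg_right
      (by linarith [monovary_iff_mul_rearrangement.1 hfg i j]) (sq_nonneg _)
  simp only [add_mul, Finset.sum_add_distrib, swap fun i j => f i * g j,
    swap fun i _ => f i * g i] at double
  rw [expand, expand_right]
  linarith

theorem trace_matPow_mul_mul_le {M H : Matrix n n ℂ} (hM : M.IsHermitian) (hH : H.IsHermitian)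
    {x y : ℝ} (hx : 0 ≤ x) (hy : 0 ≤ y) :
    (matPow M x * H * matPow M y * H).trace.re ≤ (H * matPow M (x + y) * H).trace.re := by
  rw [← matPow_mul_matPow hM]
  simp only [matPow_eq_conjDiagonal hM, ← map_mul]
  refine trace_conjDiagonal_mul_mul_le_of_monovary _ (fun i j hij => monotone_truncPow hx ?_) hH
  exact ((monotone_truncPow hy).reflect_lt hij).le

theorem trace_matPow_sub_one_mul_mul_le {M H : Matrix n n ℂ} (hM : M.IsHermitian)
    (hH : H.IsHermitian) (h : matPow M 0 * H = H) {b : ℝ} (hb : 0 ≤ b) :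
    (H * matPow M (b - 1) * H).trace.re ≤ (matPow M b * H * matPow M (-1) * H).trace.re := by
  set K := matPow M (-(1 / 2)) * H * matPow M (-(1 / 2)) with hK
  have hKH : K.IsHermitian := by
    simpa only [conjTranspose_matPow hM] using
      isHermitian_mul_mul_conjTranspose (matPow M (-(1 / 2))) hH
  have left : (matPow M b * K * matPow M 1 * K).trace = (H * matPow M (b - 1) * H).trace := by
    have regroup : matPow M b * K * matPow M 1 * K =
        matPow M (b - 1 / 2) * (H * (matPow M 0 * H) * matPow M (-(1 / 2))) := by
      simp only [hK, Matrix.mul_assoc, matPow_mul_matPow_mul hM]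
      ring_nf
    rw [regroup, h, trace_mul_comm, Matrix.mul_assoc, matPow_mul_matPow hM, trace_mul_cycle H _ H]
    ring_nf
  have right : (K * matPow M (b + 1) * K).trace = (matPow M b * H * matPow M (-1) * H).trace := by
    have regroup : K * matPow M (b + 1) * K =
        matPow M (-(1 / 2)) * (H * (matPow M b * H) * matPow M (-(1 / 2))) := by
      simp only [hK, Matrix.mul_assoc, matPow_mul_matPow_mul hM]
      ring_nf
    rw [regroup, trace_mul_comm, Matrix.mul_assoc, matPow_mul_matPow hM, Matrix.mul_assoc H,
      trace_mul_comm H]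
    ring_nf
  rw [← left, ← right]
  exact trace_matPow_mul_mul_le hM hKH hb zero_le_one

theorem trace_mul_ptraceFst_mul_matPow_neg_one_le {A : Matrix (m × n) (m × n) ℂ}
    (hA : A.PosSemidef) {P : Matrix n n ℂ} (hP : P.PosSemidef) (Y : Matrix (m × n) (m × n) ℂ) :
    (P * ptraceFst (Y * A) * matPow (ptraceFst A) (-1) * (ptraceFst (Y * A))ᴴ).trace.re ≤
      (ampliation m P * Y * A * Yᴴ).trace.re := by
  have hB := posSemidef_ptraceFst hA
  set Z := ptraceFst (Y * A) with hZ
  set X := Z * matPow (ptraceFst A) (-1) with hX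
  set q := (P * Z * matPow (ptraceFst A) (-1) * Zᴴ).trace.re with hq
  have hZc : ptraceFst (A * Yᴴ) = Zᴴ := by
    rw [hZ, conjTranspose_ptraceFst, conjTranspose_mul, hA.1]
  have hXc : Xᴴ = matPow (ptraceFst A) (-1) * Zᴴ := by
    rw [hX, conjTranspose_mul, conjTranspose_matPow hB.1]
  have cross_left : (ampliation m P * (Y * A * ampliation m Xᴴ)).trace.re = q := by
    rw [trace_ampliation_mul, ptraceFst_mul_ampliation, ← hZ, hXc, hq]
    simp only [Matrix.mul_assoc]
  have cross_right : (ampliation m P * (ampliation m X * (A * Yᴴ))).trace.re = q := by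
    rw [trace_ampliation_mul, ptraceFst_ampliation_mul, hZc, hq, hX]
    simp only [Matrix.mul_assoc]
  have square : (ampliation m P * (ampliation m X * (A * ampliation m Xᴴ))).trace.re = q := by
    rw [trace_ampliation_mul, ptraceFst_ampliation_mul, ptraceFst_mul_ampliation, hXc, hX, hq]
    nth_rw 2 [← matPow_one hB]
    simp only [Matrix.mul_assoc, matPow_mul_matPow_mul hB.1]
    norm_num
  have nonneg := re_trace_mul_nonneg (posSemidef_ampliation hP)
    (hA.mul_mul_conjTranspose_same (Y - ampliation m X))
  have expand : ampliation m P * ((Y - ampliation m X) * A * (Y - ampliation m X)ᴴ) =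
      ampliation m P * Y * A * Yᴴ - ampliation m P * (Y * A * ampliation m Xᴴ) -
        ampliation m P * (ampliation m X * (A * Yᴴ)) +
        ampliation m P * (ampliation m X * (A * ampliation m Xᴴ)) := by
    rw [conjTranspose_sub, conjTranspose_ampliation]
    simp only [Matrix.mul_sub, Matrix.sub_mul, Matrix.mul_assoc]
    abel
  rw [expand, trace_add, trace_sub, trace_sub, Complex.add_re, Complex.sub_re, Complex.sub_re,
    cross_left, cross_right, square] at nonneg
  linarith

end TraceInequalities

section ArakiLiebThirring

variable {n : Type*} [Fintype n] [DecidableEq n] {s : ℝ}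

theorem trace_matPow_add_mul_matPow_le_of_le (hs : s ∈ Set.Ioo (0 : ℝ) 1) {B D : Matrix n n ℂ}
    (hB : B.IsHermitian) (hD : D.PosSemidef) {r p : ℝ} (hp : 0 ≤ p) (hpr : p ≤ r) :
    (matPow B (r + p * s) * matPow D s).trace.re ≤
      (matPow B r * matPow (matPow B (p / 2) * D * matPow B (p / 2)) s).trace.re := by
  set N := matPow B (p / 2) * D * matPow B (p / 2) with hN
  have hNp : N.PosSemidef := posSemidef_matPow_mul_mul_matPow hB hD _
  rw [trace_mul_comm, trace_mul_comm (matPow B r)]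
  refine (isGeomMean_self_one hs.1 hD).trace_mul_le_of_forall_exists hs
    (isGeomMean_matPow hs hB (x := r + p) (y := r) (by ring)) (isGeomMean_self_one hs.1 hNp)
    (posSemidef_matPow hB r) fun Θ hΘ => ?_
  set X := matPow B (p / 2) * Θ * matPow B (-(p / 2)) with hX
  refine ⟨X, le_of_eq ?_, ?_⟩
  · have middle : X * matPow B (r + p) * Xᴴ =
        matPow B (p / 2) * (Θ * matPow B r * Θ * matPow B (p / 2)) := by
      simp only [hX, conjTranspose_mul, conjTranspose_matPow hB, hΘ.eq, Matrix.mul_assoc,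
        matPow_mul_matPow_mul hB]
      ring_nf
    rw [Matrix.mul_assoc, Matrix.mul_assoc, ← Matrix.mul_assoc X, middle, ← Matrix.mul_assoc,
      ← Matrix.mul_assoc, trace_mul_comm, hN]
    simp only [Matrix.mul_assoc]
  · have hΘ' : (1 - Θ).IsHermitian := isHermitian_one.sub hΘ
    have root : (1 - X) * matPow B (r / 2) =
        matPow B (p / 2) * (1 - Θ) * matPow B ((r - p) / 2) := by
      simp only [hX, Matrix.sub_mul, Matrix.mul_sub, Matrix.one_mul, Matrix.mul_one,
        Matrix.mul_assoc, matPow_mul_matPow hB]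
      ring_nf
    have sandwich : (1 - X) * matPow B r * (1 - X)ᴴ =
        matPow B (p / 2) * (1 - Θ) * matPow B (r - p) * (1 - Θ) * matPow B (p / 2) := by
      rw [mul_matPow_mul_conjTranspose hB, root, ← mul_matPow_mul_conjTranspose hB,
        conjTranspose_mul, conjTranspose_matPow hB, hΘ'.eq, ← Matrix.mul_assoc]
    have le := trace_matPow_mul_mul_le hB hΘ' hp (sub_nonneg.2 hpr)
    rw [add_sub_cancel] at le
    rw [Matrix.one_mul, Matrix.one_mul, sandwich, trace_mul_comm]
    simpa only [← Matrix.mul_assoc, matPow_half_mul_matPow_half hB] using le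

theorem trace_matPow_add_mul_matPow_le_of_le_nat_mul (hs : s ∈ Set.Ioo (0 : ℝ) 1)
    {B D : Matrix n n ℂ} (hB : B.IsHermitian) (hD : D.PosSemidef) {δ : ℝ} (hδ : 0 ≤ δ) (N : ℕ) :
    ∀ {r p : ℝ}, δ ≤ r → 0 ≤ p → p ≤ N * δ →
      (matPow B (r + p * s) * matPow D s).trace.re ≤
        (matPow B r * matPow (matPow B (p / 2) * D * matPow B (p / 2)) s).trace.re := by
  induction N with
  | zero =>
    intro r p hr hp hpN
    rw [Nat.cast_zero, zero_mul] at hpN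
    exact trace_matPow_add_mul_matPow_le_of_le hs hB hD hp (hpN.trans (hδ.trans hr))
  | succ N ih =>
    intro r p hr hp hpN
    rcases le_or_gt p δ with hpδ | hpδ
    · exact trace_matPow_add_mul_matPow_le_of_le hs hB hD hp (hpδ.trans hr)
    push_cast at hpN
    have inner := ih (r := r + δ * s) (p := p - δ) (by nlinarith [hs.1]) (by linarith)
      (by linarith)
    have outer := trace_matPow_add_mul_matPow_le_of_le hs hB
      (posSemidef_matPow_mul_mul_matPow hB hD ((p - δ) / 2)) hδ hr
    have nested : matPow B (δ / 2) * (matPow B ((p - δ) / 2) * D * matPow B ((p - δ) / 2)) *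
        matPow B (δ / 2) = matPow B (p / 2) * D * matPow B (p / 2) := by
      simp only [Matrix.mul_assoc, matPow_mul_matPow_mul hB, matPow_mul_matPow hB]
      ring_nf
    rw [nested] at outer
    rw [show r + p * s = r + δ * s + (p - δ) * s by ring]
    exact inner.trans outer

theorem trace_matPow_add_mul_matPow_le (hs : s ∈ Set.Ioo (0 : ℝ) 1) {B D : Matrix n n ℂ}
    (hB : B.IsHermitian) (hD : D.PosSemidef) {r p : ℝ} (hr : 0 ≤ r) (hp : 0 ≤ p) :
    (matPow B (r + p * s) * matPow D s).trace.re ≤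
      (matPow B r * matPow (matPow B (p / 2) * D * matPow B (p / 2)) s).trace.re := by
  have cont_left : Continuous fun x => (matPow B (x + p * s) * matPow D s).trace.re :=
    (continuous_trace_matPow_mul hB _).comp (continuous_add_const _)
  have cont_right := continuous_trace_matPow_mul hB
    (matPow (matPow B (p / 2) * D * matPow B (p / 2)) s)
  refine le_of_tendsto_of_tendsto (cont_left.continuousWithinAt (s := Set.Ioi r))
    cont_right.continuousWithinAt ?_
  filter_upwards [self_mem_nhdsWithin] with x hx
  have hx : 0 < x := hr.trans_lt hx
  obtain ⟨N, hN⟩ := exists_nat_ge (p / x)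
  exact trace_matPow_add_mul_matPow_le_of_le_nat_mul hs hB hD hx.le N le_rfl hp
    ((div_le_iff₀ hx).1 hN)

end ArakiLiebThirring

section PetzQuasi

variable {n m : Type*} [Fintype n] [DecidableEq n] [Fintype m] [DecidableEq m]

/-- The Petz quasi-entropy `Tr[A^{1-t} E^t]`, the trace functional inside the Petz-Rényi relative
entropy of order `1 - t`. -/
noncomputable def petzQuasi (t : ℝ) (A E : Matrix n n ℂ) : ℝ :=
  (matPow A (1 - t) * matPow E t).trace.re

theorem petzQuasi_eq_trace_mul (t : ℝ) (A E : Matrix n n ℂ) :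
    petzQuasi t A E = (matPow E t * matPow A (1 - t)).trace.re := by
  rw [petzQuasi, trace_mul_comm]

theorem petzQuasi_ampliation (t : ℝ) (A : Matrix (m × n) (m × n) ℂ) {E : Matrix n n ℂ}
    (hE : E.IsHermitian) :
    petzQuasi t A (ampliation m E) = (matPow E t * ptraceFst (matPow A (1 - t))).trace.re := by
  rw [petzQuasi_eq_trace_mul, matPow_map _ hE, trace_ampliation_mul]

variable {A : Matrix (m × n) (m × n) ℂ} {E : Matrix n n ℂ} {s a b c : ℝ}

theorem petzQuasi_ampliation_le (hA : A.PosSemidef) (hE : E.IsHermitian)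
    (hs : s ∈ Set.Ioo (0 : ℝ) 1) (hb : s * b = a) (hc : (1 - s) * c = a) :
    petzQuasi a A (ampliation m E) ≤
      petzQuasi b A (ampliation m (ptraceFst A)) ^ s * petzQuasi c (ptraceFst A) E ^ (1 - s) := by
  have hB := posSemidef_ptraceFst hA
  rw [petzQuasi_ampliation b A hB.1, petzQuasi_eq_trace_mul]
  refine (isGeomMean_one_matPow hs.2 (isHermitian_ampliation hE)
      hc).trace_mul_le_rpow_mul_rpow_of_forall_exists hs
    (isGeomMean_matPow hs hA.1 (x := 1 - b) (y := 1) (by linarith)) hB.1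
    (posSemidef_ptraceFst (posSemidef_matPow hA.1 _)) (posSemidef_matPow hE _)
    (x₀ := 0) (x₁ := 1) (by linarith) fun Θ hΘ hcomm => ⟨ampliation m Θ, le_of_eq ?_, le_of_eq ?_⟩
  · rw [matPow_zero_mul_sandwich (hcomm 0)
        (mul_ptraceFst_matPow_of_mul_ptraceFst hA (matPow_zero_mul_self hB) _),
      ← map_one (ampliation m), trace_ampliation_sandwich, hΘ.eq, Matrix.one_mul]
  · rw [matPow_map _ hE, ← map_one (ampliation m), ← map_sub, trace_ampliation_sandwich,
      matPow_one hA, matPow_one hB, trace_mul_mul_mul_comm, (isHermitian_one.sub hΘ).eq]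

theorem petzQuasi_ampliation_ptraceFst_le_of_nonpos (hA : A.PosSemidef) (hE : E.IsHermitian)
    (hsupp : matPow E 0 * ptraceFst A = ptraceFst A) (hs : s ∈ Set.Ioo (0 : ℝ) 1)
    (ha : s * a = b) (hc : (1 - s) * c = -b) (hc0 : c ≤ 0) :
    petzQuasi b A (ampliation m (ptraceFst A)) ≤
      petzQuasi a A (ampliation m E) ^ s * petzQuasi c (ptraceFst A) E ^ (1 - s) := by
  have hB := posSemidef_ptraceFst hA
  rw [petzQuasi_ampliation a A hE, petzQuasi_eq_trace_mul, petzQuasi_eq_trace_mul]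
  refine (isGeomMean_one_matPow hs.2 (isHermitian_ampliation hB.1) (y := -c)
      (by linarith)).trace_mul_le_rpow_mul_rpow_of_forall_exists hs
    (isGeomMean_matPow hs hA.1 (x := 1 - a) (y := 1) (by linarith)) hE
    (posSemidef_ptraceFst (posSemidef_matPow hA.1 _)) (posSemidef_matPow hB.1 _)
    (x₀ := 0) (x₁ := 0) (by linarith) fun Θ hΘ hcomm => ⟨ampliation m Θ, le_of_eq ?_, ?_⟩
  · rw [matPow_zero_mul_sandwich (hcomm 0) (mul_ptraceFst_matPow_of_mul_ptraceFst hA hsupp _),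
      ← map_one (ampliation m), trace_ampliation_sandwich, hΘ.eq, Matrix.one_mul]
  · have hΘ' : (1 - Θ).IsHermitian := isHermitian_one.sub hΘ
    have le := trace_matPow_mul_mul_le hB.1 hΘ' (neg_nonneg.2 hc0) zero_le_one
    rw [matPow_zero_mul_sandwich ((Commute.one_left _).sub_left (hcomm 0))
        (mul_matPow_of_mul_eq_self hB hsupp _), matPow_map _ hB.1, ← map_one (ampliation m),
      ← map_sub, trace_ampliation_sandwich, matPow_one hA, hΘ'.eq]
    rwa [matPow_one hB, neg_add_eq_sub] at le

theorem trace_matPow_mul_sandwich {M : Matrix n n ℂ} (hM : M.IsHermitian) (t : ℝ)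
    (Y : Matrix n n ℂ) :
    (matPow M t * (matPow M (1 / 2) * Y * matPow M (1 / 2))).trace =
      (matPow M (1 + t) * Y).trace := by
  rw [Matrix.mul_assoc (matPow M _), matPow_mul_matPow_mul hM, trace_mul_comm, Matrix.mul_assoc,
    matPow_mul_matPow hM, trace_mul_comm]
  ring_nf

theorem petzQuasi_ampliation_ptraceFst_le_trace_matPow_mul (hA : A.PosSemidef)
    (hs : s ∈ Set.Ioo (0 : ℝ) 1) (ha : s * a = b) :
    petzQuasi b A (ampliation m (ptraceFst A)) ≤
      (matPow (ptraceFst A) (1 + b) * matPow (matPow (ptraceFst A) (-(1 / 2)) *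
        ptraceFst (matPow A (1 - a)) * matPow (ptraceFst A) (-(1 / 2))) s).trace.re := by
  have hB := posSemidef_ptraceFst hA
  have hG := posSemidef_matPow_mul_mul_matPow hB.1
    (posSemidef_ptraceFst (posSemidef_matPow hA.1 (1 - a))) (-(1 / 2))
  set B := ptraceFst A
  rw [petzQuasi_eq_trace_mul, trace_mul_comm (matPow B _)]
  refine (isGeomMean_matPow hs (isHermitian_ampliation hB.1) (x := b) (y := b)
      (by ring)).trace_mul_le_of_forall_exists hs
    (isGeomMean_matPow hs hA.1 (x := 1 - a) (y := 1) (by linarith)) (isGeomMean_self_one hs.1 hG)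
    (posSemidef_matPow hB.1 _) fun Θ hΘ => ?_
  set X := matPow B (1 / 2) * Θ * matPow B (-(1 / 2)) with hX
  rw [matPow_map _ hB.1, matPow_one hA]
  refine ⟨ampliation m X, le_of_eq ?_, ?_⟩
  · have sandwich : X * ptraceFst (matPow A (1 - a)) * Xᴴ = matPow B (1 / 2) *
        (Θ * (matPow B (-(1 / 2)) * ptraceFst (matPow A (1 - a)) * matPow B (-(1 / 2))) * Θ) *
          matPow B (1 / 2) := by
      simp only [hX, conjTranspose_mul, conjTranspose_matPow hB.1, hΘ.eq, Matrix.mul_assoc]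
    rw [trace_ampliation_sandwich, Matrix.mul_assoc _ X, Matrix.mul_assoc, sandwich,
      trace_matPow_mul_sandwich hB.1, ← Matrix.mul_assoc, ← Matrix.mul_assoc,
      trace_mul_mul_mul_comm]
  · have hΘ' : (1 - Θ).IsHermitian := isHermitian_one.sub hΘ
    have root : (1 - X) * matPow B (1 / 2) = matPow B (1 / 2) * (1 - Θ) * matPow B (0 / 2) := by
      simp only [hX, Matrix.sub_mul, Matrix.mul_sub, Matrix.one_mul, Matrix.mul_one,
        Matrix.mul_assoc, matPow_mul_matPow hB.1]
      norm_num
    have sandwich : (1 - X) * B * (1 - X)ᴴ =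
        matPow B (1 / 2) * ((1 - Θ) * matPow B 0 * (1 - Θ)) * matPow B (1 / 2) := by
      rw [← matPow_one hB, mul_matPow_mul_conjTranspose hB.1, matPow_one hB, root,
        ← mul_matPow_mul_conjTranspose hB.1, conjTranspose_mul, conjTranspose_matPow hB.1, hΘ'.eq]
      simp only [Matrix.mul_assoc]
    have le := trace_matPow_zero_mul_le hB.1
      ((posSemidef_matPow hB.1 (1 + b)).mul_mul_conjTranspose_same (1 - Θ))
    rw [← map_one (ampliation m), ← map_sub, trace_ampliation_sandwich, Matrix.mul_assoc _ (1 - X),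
      Matrix.mul_assoc, sandwich, trace_matPow_mul_sandwich hB.1, Matrix.one_mul,
      ← Matrix.mul_assoc, ← Matrix.mul_assoc, trace_mul_mul_mul_comm]
    rwa [hΘ'.eq, ← Matrix.mul_assoc, ← Matrix.mul_assoc] at le

theorem trace_matPow_mul_matPow_le_rpow_mul_rpow (hs : s ∈ Set.Ioo (0 : ℝ) 1)
    {B N : Matrix n n ℂ} (hB : B.PosSemidef) (hE : E.IsHermitian) (hsupp : matPow E 0 * B = B)
    (hN : N.PosSemidef) {x y : ℝ} (hxy : s * x + (1 - s) * y = 0) (r : ℝ) :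
    (matPow B r * matPow N s).trace.re ≤
      (matPow E x * (matPow B (r / 2) * N * matPow B (r / 2))).trace.re ^ s *
        (matPow E y * matPow B r).trace.re ^ (1 - s) := by
  have hölder := (isGeomMean_matPow hs hE hxy).trace_le_rpow_mul_rpow hs
    (isGeomMean_self_one hs.1 hN) (matPow B (r / 2))
  have left : (matPow E 0 * matPow B (r / 2) * matPow N s * matPow B (r / 2)).trace =
      (matPow B r * matPow N s).trace := by
    rw [mul_matPow_of_mul_eq_self hB hsupp, trace_mul_comm, ← Matrix.mul_assoc,
      matPow_half_mul_matPow_half hB.1]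
  rwa [conjTranspose_matPow hB.1, left, Matrix.mul_one, Matrix.mul_assoc (matPow E y),
    matPow_half_mul_matPow_half hB.1, Matrix.mul_assoc (matPow E x), Matrix.mul_assoc (matPow E x)]
    at hölder

theorem petzQuasi_ampliation_ptraceFst_le_of_nonneg (hA : A.PosSemidef) (hE : E.IsHermitian)
    (hsupp : matPow E 0 * ptraceFst A = ptraceFst A) (hs : s ∈ Set.Ioo (0 : ℝ) 1)
    (ha : s * a = b) (hc : (1 - s) * c = -b) (hc0 : 0 ≤ c) (hc1 : c ≤ 1) :
    petzQuasi b A (ampliation m (ptraceFst A)) ≤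
      petzQuasi a A (ampliation m E) ^ s * petzQuasi c (ptraceFst A) E ^ (1 - s) := by
  have hB := posSemidef_ptraceFst hA
  have hT := posSemidef_ptraceFst (posSemidef_matPow hA.1 (1 - a))
  have hTsupp := mul_ptraceFst_matPow_of_mul_ptraceFst hA (matPow_zero_mul_self hB) (1 - a)
  have hTsupp' := mul_eq_self_of_isHermitian hT.1 (posSemidef_matPow hB.1 0).1 hTsupp
  have to_matPow := petzQuasi_ampliation_ptraceFst_le_trace_matPow_mul hA hs ha
  set B := ptraceFst A
  rw [petzQuasi_ampliation a A hE, petzQuasi_eq_trace_mul c]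
  set T := ptraceFst (matPow A (1 - a))
  set G := matPow B (-(1 / 2)) * T * matPow B (-(1 / 2)) with hG
  have hGpos : G.PosSemidef := posSemidef_matPow_mul_mul_matPow hB.1 hT _
  set N := matPow B (c / 2) * G * matPow B (c / 2) with hN
  have alt : (matPow B (1 + b) * matPow G s).trace.re ≤
      (matPow B (1 - c) * matPow N s).trace.re := by
    rw [show 1 + b = 1 - c + c * s by linarith]
    exact trace_matPow_add_mul_matPow_le hs hB.1 hGpos (sub_nonneg.2 hc1) hc0
  refine to_matPow.trans (alt.trans ?_)
  have cancel : (1 - c) / 2 + (c / 2 + -(1 / 2)) = 0 := by ring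
  have cancel' : -(1 / 2) + c / 2 + (1 - c) / 2 = 0 := by ring
  have sandwich : matPow B ((1 - c) / 2) * N * matPow B ((1 - c) / 2) = T := by
    simp only [hN, hG, Matrix.mul_assoc, matPow_mul_matPow_mul hB.1, matPow_mul_matPow hB.1,
      cancel, cancel', hTsupp, hTsupp']
  have hölder := trace_matPow_mul_matPow_le_rpow_mul_rpow hs hB hE hsupp (x := a) (y := c)
    (posSemidef_matPow_mul_mul_matPow hB.1 hGpos (c / 2)) (by linarith) (1 - c)
  rwa [sandwich] at hölder

theorem trace_mul_ptraceFst_mul_le_of_commute {Y : Matrix (m × n) (m × n) ℂ}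
    (hA : A.PosSemidef) (hY : Y.IsHermitian) (hYA : Commute Y A) {P : Matrix n n ℂ}
    (hP : P.PosSemidef) :
    (P * ptraceFst (Y * A) * matPow (ptraceFst A) (-1) * ptraceFst (Y * A)).trace.re ≤
      (A * Y * ampliation m P * Y).trace.re := by
  have schwarz := trace_mul_ptraceFst_mul_matPow_neg_one_le hA hP Y
  rwa [isHermitian_ptraceFst_mul hA.1 hY hYA, hY.eq, trace_mul_mul_mul_comm (ampliation m P)]
    at schwarz

theorem trace_ptraceFst_mul_matPow_sub_one_le_of_commute {Y : Matrix (m × n) (m × n) ℂ}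
    (hA : A.PosSemidef) (hY : Y.IsHermitian) (hYA : Commute Y A) (hb : 0 ≤ b) :
    (ptraceFst (Y * A) * matPow (ptraceFst A) (b - 1) * ptraceFst (Y * A)).trace.re ≤
      (A * Y * ampliation m (matPow (ptraceFst A) b) * Y).trace.re := by
  have hB := posSemidef_ptraceFst hA
  have hsupp : matPow (ptraceFst A) 0 * ptraceFst (Y * A) = ptraceFst (Y * A) := by
    rw [hYA.eq, ← ptraceFst_ampliation_mul, ← Matrix.mul_assoc,
      ampliation_matPow_zero_ptraceFst_mul hA]
  exact (trace_matPow_sub_one_mul_mul_le hB.1 (isHermitian_ptraceFst_mul hA.1 hY hYA) hsupp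
    hb).trans (trace_mul_ptraceFst_mul_le_of_commute hA hY hYA (posSemidef_matPow hB.1 b))

theorem petzQuasi_ptraceFst_le_of_nonneg (hA : A.PosSemidef) (hE : E.IsHermitian)
    (hs : s ∈ Set.Ioo (0 : ℝ) 1) (ha : s * a = c) (hb : (1 - s) * b = -c) (hb0 : 0 ≤ b) :
    petzQuasi c (ptraceFst A) E ≤
      petzQuasi a A (ampliation m E) ^ s *
        petzQuasi b A (ampliation m (ptraceFst A)) ^ (1 - s) := by
  have hB := posSemidef_ptraceFst hA
  rw [petzQuasi_eq_trace_mul, petzQuasi, petzQuasi, matPow_map _ hE, matPow_map _ hB.1]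
  refine (isGeomMean_matPow_one hs.1 hE ha).trace_mul_le_rpow_mul_rpow_of_forall_exists hs
    (isGeomMean_matPow hs hB.1 (x := 1) (y := 1 + b) (by linarith)) hA.1
    (posSemidef_ampliation (posSemidef_matPow hE _))
    (posSemidef_ampliation (posSemidef_matPow hB.1 _)) (x₀ := 1) (x₁ := 1) (by linarith)
    fun Θ hΘ hcomm => ?_
  have hΘA : Commute Θ A := matPow_one hA ▸ hcomm 1
  have hW := isHermitian_ptraceFst_mul hA.1 hΘ hΘA
  have le₀ := trace_mul_ptraceFst_mul_le_of_commute hA hΘ hΘA (posSemidef_matPow hE a)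
  have le₁ := trace_ptraceFst_mul_matPow_sub_one_le_of_commute hA (isHermitian_one.sub hΘ)
    ((Commute.one_left A).sub_left hΘA) hb0
  rw [Matrix.sub_mul, Matrix.one_mul, ptraceFst_sub] at le₁
  set B := ptraceFst A
  set W := ptraceFst (Θ * A)
  set X := W * matPow B (-1) with hX
  have X_sandwich : X * matPow B 1 * Xᴴ = W * matPow B (-1) * W := by
    simp only [hX, conjTranspose_mul, conjTranspose_matPow hB.1, hW.eq, Matrix.mul_assoc,
      matPow_mul_matPow_mul hB.1]
    norm_num
  have root : (1 - X) * matPow B ((1 + b) / 2) = (B - W) * matPow B ((b - 1) / 2) := by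
    nth_rw 2 [← matPow_one hB]
    simp only [hX, Matrix.sub_mul, Matrix.one_mul, Matrix.mul_assoc, matPow_mul_matPow hB.1]
    ring_nf
  rw [matPow_one hA]
  refine ⟨X, le_of_eq_of_le ?_ le₀, le_of_eq_of_le ?_ le₁⟩
  · rw [Matrix.mul_assoc _ X, Matrix.mul_assoc, X_sandwich]
    simp only [Matrix.mul_assoc]
  · rw [Matrix.one_mul, mul_matPow_mul_conjTranspose hB.1, root,
      ← mul_matPow_mul_conjTranspose hB.1, (hB.1.sub hW).eq]

theorem trace_matPow_ptraceFst_mul_matPow_le_rpow_mul_rpow (hs : s ∈ Set.Ioo (0 : ℝ) 1)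
    (hA : A.PosSemidef) {N : Matrix n n ℂ} (hN : N.PosSemidef) {x y : ℝ}
    (hxy : s * x + (1 - s) * y = 1) (r : ℝ) :
    (matPow (ptraceFst A) (1 + r) * matPow N s).trace.re ≤
      (matPow A x * ampliation m (matPow (ptraceFst A) (r / 2) * N *
        matPow (ptraceFst A) (r / 2))).trace.re ^ s *
        (matPow A y * ampliation m (matPow (ptraceFst A) r)).trace.re ^ (1 - s) := by
  have hB := posSemidef_ptraceFst hA
  have hölder := (isGeomMean_matPow hs hA.1 hxy).trace_le_rpow_mul_rpow hs
    (isGeomMean_self_one hs.1 (posSemidef_ampliation hN))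
    (ampliation m (matPow (ptraceFst A) (r / 2)))
  have left : (A * ampliation m (matPow (ptraceFst A) (r / 2) * matPow N s *
      matPow (ptraceFst A) (r / 2))).trace = (matPow (ptraceFst A) (1 + r) * matPow N s).trace := by
    rw [trace_mul_comm, trace_ampliation_mul, Matrix.mul_assoc, trace_mul_comm,
      ← Matrix.mul_assoc]
    nth_rw 2 [← matPow_one hB]
    simp only [matPow_mul_matPow hB.1]
    ring_nf
  rw [matPow_one hA, Matrix.mul_one, conjTranspose_ampliation, conjTranspose_matPow hB.1,
    matPow_map _ hN.1] at hölder
  simp only [Matrix.mul_assoc, ← map_mul] at hölder left ⊢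
  rwa [left, matPow_half_mul_matPow_half hB.1] at hölder

theorem petzQuasi_ptraceFst_le_of_nonpos (hA : A.PosSemidef) (hE : E.IsHermitian)
    (hs : s ∈ Set.Ioo (0 : ℝ) 1) (ha : s * a = c) (hb : (1 - s) * b = -c) (hb0 : b ≤ 0)
    (hb1 : -1 ≤ b) :
    petzQuasi c (ptraceFst A) E ≤
      petzQuasi a A (ampliation m E) ^ s *
        petzQuasi b A (ampliation m (ptraceFst A)) ^ (1 - s) := by
  have hB := posSemidef_ptraceFst hA
  have hAsupp := mul_matPow_of_mul_eq_self hA (ampliation_matPow_zero_ptraceFst_mul hA) (1 - a)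
  have hAsupp' := mul_eq_self_of_isHermitian (posSemidef_matPow hA.1 _).1
    (isHermitian_ampliation (posSemidef_matPow hB.1 0).1) hAsupp
  have alt := trace_matPow_add_mul_matPow_le hs hB.1 (posSemidef_matPow hE a) (r := 1 + b)
    (p := -b) (by linarith) (by linarith)
  have hölder := trace_matPow_ptraceFst_mul_matPow_le_rpow_mul_rpow hs hA (x := 1 - a)
    (y := 1 - b) (posSemidef_matPow_mul_mul_matPow hB.1 (posSemidef_matPow hE a) (-b / 2))
    (by linarith) b
  rw [petzQuasi, petzQuasi, petzQuasi, matPow_map _ hE, matPow_map _ hB.1]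
  set B := ptraceFst A
  rw [matPow_matPow hE, mul_comm a, ha, show 1 + b + -b * s = 1 - c by linarith] at alt
  have cancel : matPow B (b / 2) * (matPow B (-b / 2) * matPow E a * matPow B (-b / 2)) *
      matPow B (b / 2) = matPow B 0 * matPow E a * matPow B 0 := by
    simp only [Matrix.mul_assoc, matPow_mul_matPow_mul hB.1, matPow_mul_matPow hB.1]
    ring_nf
  refine alt.trans (hölder.trans_eq ?_)
  rw [cancel, map_mul, map_mul, ← Matrix.mul_assoc, ← Matrix.mul_assoc, hAsupp',
    trace_mul_comm (matPow A (1 - a) * _), ← Matrix.mul_assoc, hAsupp,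
    trace_mul_comm (matPow A (1 - a))]

end PetzQuasi

section LogForm

theorem exists_mem_Ioo_mul_eq {u v w : ℝ} (huv : 0 < u * v) (huw : 0 < u * w)
    (h : v * w = u * w + u * v) :
    ∃ s ∈ Set.Ioo (0 : ℝ) 1, s * v = u ∧ (1 - s) * w = u := by
  have hv : v ≠ 0 := right_ne_zero_of_mul huv.ne'
  have hw : w ≠ 0 := right_ne_zero_of_mul huw.ne'
  have one_sub : 1 - u / v = u / w := by
    field_simp
    linarith
  have pos : 0 < u / v := div_pos_iff.2 (mul_pos_iff.1 huv)
  have pos' : 0 < u / w := div_pos_iff.2 (mul_pos_iff.1 huw)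
  exact ⟨u / v, ⟨pos, by linarith⟩, div_mul_cancel₀ u hv, by rw [one_sub, div_mul_cancel₀ u hw]⟩

theorem mul_log_le_of_le_rpow_mul_rpow {x y z : ℝ} (hx : 0 < x) (hy : 0 < y) (hz : 0 < z)
    {s u v w : ℝ} (hv : s * v = u) (hw : (1 - s) * w = u) (hvw : 0 ≤ v * w)
    (h : x ≤ y ^ s * z ^ (1 - s)) :
    v * w * Real.log x ≤ u * w * Real.log y + u * v * Real.log z := by
  have hlog := Real.log_le_log hx h
  rw [Real.log_mul (by positivity) (by positivity), Real.log_rpow hy, Real.log_rpow hz] at hlog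
  calc v * w * Real.log x
      ≤ v * w * (s * Real.log y + (1 - s) * Real.log z) := mul_le_mul_of_nonneg_left hlog hvw
    _ = s * v * w * Real.log y + (1 - s) * w * v * Real.log z := by ring
    _ = u * w * Real.log y + u * v * Real.log z := by rw [hv, hw]

theorem neg_mul_one_div_mul_add_le {a b c x y z : ℝ} (ha : a ≠ 0) (hb : b ≠ 0) (hc : c ≠ 0)
    (h : b * c * x ≤ a * c * y + a * b * z) :
    -(a * b * c) * (1 / b * y + 1 / c * z) ≤ -(a * b * c) * (1 / a * x) := by
  have left : -(a * b * c) * (1 / b * y + 1 / c * z) = -(a * c * y + a * b * z) := by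
    field_simp
  have right : -(a * b * c) * (1 / a * x) = -(b * c * x) := by
    field_simp
  rw [left, right]
  exact neg_le_neg h

variable {n m : Type*} [Fintype n] [DecidableEq n] [Fintype m] [DecidableEq m]
  {A : Matrix (m × n) (m × n) ℂ} {E : Matrix n n ℂ} {a b c : ℝ}

theorem petzQuasi_ampliation_pos (hA : A.PosSemidef) (hA0 : A ≠ 0) (hE : E.IsHermitian)
    (hsupp : matPow E 0 * ptraceFst A = ptraceFst A) (t : ℝ) :
    0 < petzQuasi t A (ampliation m E) := by
  refine trace_matPow_mul_matPow_pos hA (isHermitian_ampliation hE) hA0 ?_ _ _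
  rw [matPow_map _ hE, ampliation_mul_of_mul_ptraceFst hA hsupp]

theorem mul_log_petzQuasi_le (hA : A.PosSemidef) (hA0 : A ≠ 0) (hE : E.IsHermitian)
    (hsupp : matPow E 0 * ptraceFst A = ptraceFst A) (ha : a ≠ 0) (hb : b ≠ 0) (hc : c ≠ 0)
    (hb1 : -1 ≤ b) (hc1 : c ≤ 1) (hrel : b * c = a * c + a * b) :
    b * c * Real.log (petzQuasi a A (ampliation m E)) ≤
      a * c * Real.log (petzQuasi b A (ampliation m (ptraceFst A))) +
        a * b * Real.log (petzQuasi c (ptraceFst A) E) := by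
  have hB := posSemidef_ptraceFst hA
  have pos_a := petzQuasi_ampliation_pos hA hA0 hE hsupp a
  have pos_b := petzQuasi_ampliation_pos hA hA0 hB.1 (matPow_zero_mul_self hB) b
  have pos_c : 0 < petzQuasi c (ptraceFst A) E :=
    trace_matPow_mul_matPow_pos hB hE (ptraceFst_ne_zero hA hA0) hsupp _ _
  have sq_mul : a * b * (a * c) = a ^ 2 * (b * c) := by ring
  have ha2 : 0 < a ^ 2 := sq_pos_of_ne_zero ha
  rcases (mul_ne_zero ha hb).lt_or_gt with hab | hab <;>
    rcases (mul_ne_zero ha hc).lt_or_gt with hac | hac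
  · have hbc : 0 < b * c := pos_of_mul_pos_right (sq_mul ▸ mul_pos_of_neg_of_neg hab hac) ha2.le
    linarith
  · have hbc : b * c < 0 := neg_of_mul_neg_right (sq_mul ▸ mul_neg_of_neg_of_pos hab hac) ha2.le
    obtain ⟨s, hs, hsa, hsb⟩ := exists_mem_Ioo_mul_eq (u := c) (v := a) (w := -b)
      (by linarith) (by linarith) (by linarith)
    have hsb' : (1 - s) * b = -c := by linarith
    have le := (le_total 0 b).elim (petzQuasi_ptraceFst_le_of_nonneg hA hE hs hsa hsb')
      fun hb0 => petzQuasi_ptraceFst_le_of_nonpos hA hE hs hsa hsb' hb0 hb1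
    linarith [mul_log_le_of_le_rpow_mul_rpow pos_c pos_a pos_b hsa hsb (by linarith) le]
  · have hbc : b * c < 0 := neg_of_mul_neg_right (sq_mul ▸ mul_neg_of_pos_of_neg hab hac) ha2.le
    obtain ⟨s, hs, hsa, hsc⟩ := exists_mem_Ioo_mul_eq (u := b) (v := a) (w := -c)
      (by linarith) (by linarith) (by linarith)
    have hsc' : (1 - s) * c = -b := by linarith
    have le := (le_total 0 c).elim
      (fun hc0 => petzQuasi_ampliation_ptraceFst_le_of_nonneg hA hE hsupp hs hsa hsc' hc0 hc1)
      (petzQuasi_ampliation_ptraceFst_le_of_nonpos hA hE hsupp hs hsa hsc')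
    linarith [mul_log_le_of_le_rpow_mul_rpow pos_b pos_a pos_c hsa hsc (by linarith) le]
  · obtain ⟨s, hs, hsb, hsc⟩ := exists_mem_Ioo_mul_eq hab hac hrel
    exact mul_log_le_of_le_rpow_mul_rpow pos_a pos_b pos_c hsb hsc (by linarith)
      (petzQuasi_ampliation_le hA hE hs hsb hsc)

end LogForm

section Reindex

variable {n m : Type*} [Fintype n] [Fintype m]

theorem trace_submatrix_equiv (e : m ≃ n) (M : Matrix n n ℂ) :
    (M.submatrix e e).trace = M.trace :=
  e.sum_comp fun i => M i i

variable [DecidableEq n] [DecidableEq m]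

theorem matPow_submatrix_equiv (e : m ≃ n) {M : Matrix n n ℂ} (hM : M.IsHermitian) (t : ℝ) :
    matPow (M.submatrix e e) t = (matPow M t).submatrix e e :=
  matPow_map { (reindexAlgEquiv ℂ ℂ e.symm : Matrix n n ℂ →ₐ[ℂ] Matrix m m ℂ) with
    map_star' := fun _ => rfl } hM t

theorem petzQuasi_submatrix_equiv (t : ℝ) (e : m ≃ n) {A E : Matrix n n ℂ}
    (hA : A.IsHermitian) (hE : E.IsHermitian) :
    petzQuasi t (A.submatrix e e) (E.submatrix e e) = petzQuasi t A E := by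
  rw [petzQuasi, matPow_submatrix_equiv e hA, matPow_submatrix_equiv e hE,
    submatrix_mul_equiv, trace_submatrix_equiv, petzQuasi]

end Reindex

section Tripartite

variable {k n m : Type*} [Fintype k] [Fintype n] [Fintype m]

theorem ptraceFst_ptraceFst_submatrix_prodAssoc
    (ρ : Matrix ((k × m) × n) ((k × m) × n) ℂ) :
    ptraceFst (ptraceFst (ρ.submatrix (Equiv.prodAssoc k m n).symm (Equiv.prodAssoc k m n).symm)) =
      ptraceFst ρ := by
  ext j j'
  simp only [ptraceFst, of_apply, Fintype.sum_prod_type]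
  exact Finset.sum_comm

variable [DecidableEq k] [DecidableEq n] [DecidableEq m]

theorem ampliation_submatrix_prodAssoc (E : Matrix n n ℂ) :
    (ampliation (k × m) E).submatrix (Equiv.prodAssoc k m n).symm (Equiv.prodAssoc k m n).symm =
      ampliation k (ampliation m E) := by
  change ((1 : Matrix (k × m) (k × m) ℂ) ⊗ₖ E).submatrix _ _ = 1 ⊗ₖ (1 ⊗ₖ E)
  rw [← one_kronecker_one, kronecker_assoc']

theorem HPetzDown_eq_log_petzQuasi (α : ℝ) {ρ : Matrix (m × n) (m × n) ℂ}
    (hρ : ρ.PosSemidef) :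
    HPetzDown α ρ =
      1 / (1 - α) * Real.log (petzQuasi (1 - α) ρ (ampliation m (ptraceFst ρ))) := by
  rw [petzQuasi, matPow_map _ (posSemidef_ptraceFst hρ).1, sub_sub_cancel]
  rfl

theorem HPetzDown_prod_eq_log_petzQuasi (α : ℝ) {ρ : Matrix ((k × m) × n) ((k × m) × n) ℂ}
    (hρ : ρ.PosSemidef) :
    HPetzDown α ρ = 1 / (1 - α) * Real.log (petzQuasi (1 - α)
      (ρ.submatrix (Equiv.prodAssoc k m n).symm (Equiv.prodAssoc k m n).symm)
      (ampliation k (ampliation m (ptraceFst ρ)))) := by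
  rw [← ampliation_submatrix_prodAssoc, petzQuasi_submatrix_equiv _ _ hρ.1
    (isHermitian_ampliation (posSemidef_ptraceFst hρ).1), HPetzDown_eq_log_petzQuasi α hρ]

theorem mul_HPetzDown_le {α β γ : ℝ} (hα : α ≠ 1) (hβ : β ≠ 1) (hβ2 : β ≤ 2) (hγ : γ ≠ 1)
    (hγ0 : 0 ≤ γ) (hrel : 1 / (1 - α) = 1 / (1 - β) + 1 / (1 - γ))
    {ρ : Matrix ((k × m) × n) ((k × m) × n) ℂ} (hρ : ρ.PosSemidef) (hρ0 : ρ ≠ 0)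
    {ρA_BC : Matrix (k × (m × n)) (k × (m × n)) ℂ}
    (hρA_BC : ρA_BC =
      ρ.submatrix (Equiv.prodAssoc k m n).symm (Equiv.prodAssoc k m n).symm) :
    (α - 1) * (β - 1) * (γ - 1) * (HPetzDown β ρA_BC + HPetzDown γ (ptraceFst ρA_BC)) ≤
      (α - 1) * (β - 1) * (γ - 1) * HPetzDown α ρ := by
  have ha : 1 - α ≠ 0 := sub_ne_zero.2 hα.symm
  have hb : 1 - β ≠ 0 := sub_ne_zero.2 hβ.symm
  have hc : 1 - γ ≠ 0 := sub_ne_zero.2 hγ.symm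
  have hA : ρA_BC.PosSemidef := hρA_BC ▸ hρ.submatrix _
  have hA0 : ρA_BC ≠ 0 := hρA_BC ▸
    (reindex (Equiv.prodAssoc k m n) (Equiv.prodAssoc k m n)).injective.ne hρ0
  have hB := posSemidef_ptraceFst hA
  have hC := posSemidef_ptraceFst hB
  have hptrace : ptraceFst ρ = ptraceFst (ptraceFst ρA_BC) := by
    rw [hρA_BC, ptraceFst_ptraceFst_submatrix_prodAssoc]
  have hsupp : matPow (ampliation m (ptraceFst (ptraceFst ρA_BC))) 0 * ptraceFst ρA_BC =
      ptraceFst ρA_BC := by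
    rw [matPow_map _ hC.1, ampliation_matPow_zero_ptraceFst_mul hB]
  have log_le := mul_log_petzQuasi_le hA hA0 (isHermitian_ampliation hC.1) hsupp ha hb hc
    (by linarith) (by linarith) (by field_simp at hrel; linarith)
  rw [HPetzDown_prod_eq_log_petzQuasi α hρ, HPetzDown_eq_log_petzQuasi β hA,
    HPetzDown_eq_log_petzQuasi γ hB, hptrace, ← hρA_BC]
  rw [show (α - 1) * (β - 1) * (γ - 1) = -((1 - α) * (1 - β) * (1 - γ)) by ring]
  exact neg_mul_one_div_mul_add_le ha hb hc log_le

end Tripartite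

end PetzChainRule

theorem stmt14_general {mA mB mC : Type*}
    [Fintype mA] [DecidableEq mA] [Fintype mB] [DecidableEq mB]
    [Fintype mC] [DecidableEq mC]
    (α β γ : ℝ) (hα : α ≠ 1) (hβ : β ≠ 1 ∧ β ≤ 2) (hγ : 0 ≤ γ ∧ γ ≠ 1)
    (hrel : 1 / (1 - α) = 1 / (1 - β) + 1 / (1 - γ))
    (ρ : Matrix ((mA × mB) × mC) ((mA × mB) × mC) ℂ) (hρ : ρ.PosSemidef) (hρ0 : ρ ≠ 0)
    (ρA_BC : Matrix (mA × (mB × mC)) (mA × (mB × mC)) ℂ)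
    (hρA_BC : ρA_BC = Matrix.of fun x y =>
      ρ ((x.1, x.2.1), x.2.2) ((y.1, y.2.1), y.2.2))
    (ρBC : Matrix (mB × mC) (mB × mC) ℂ)
    (hρBC : ρBC = Matrix.of fun x y => ∑ a, ρ ((a, x.1), x.2) ((a, y.1), y.2)) :
    ((α - 1) * (β - 1) * (γ - 1) > 0 →
      HPetzDown α ρ ≥ HPetzDown β ρA_BC + HPetzDown γ ρBC) ∧
    ((α - 1) * (β - 1) * (γ - 1) < 0 →
      HPetzDown α ρ ≤ HPetzDown β ρA_BC + HPetzDown γ ρBC) := by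
  have hρBC' : ρBC = ptraceFst ρA_BC := by
    rw [hρBC, hρA_BC]
    rfl
  have chain := PetzChainRule.mul_HPetzDown_le hα hβ.1 hβ.2 hγ.2 hγ.1 hrel hρ hρ0 hρA_BC
  rw [← hρBC'] at chain
  exact ⟨le_of_mul_le_mul_left chain, fun h => (mul_le_mul_left_of_neg h).1 chain⟩

/-- Petz arrow-down chain rule: for `α, β, γ ∈ (0,1) ∪ (1,2]` with
`1/(1−α) = 1/(1−β) + 1/(1−γ)` and a tripartite state `ρ_ABC`:
if `(α−1)(β−1)(γ−1) > 0` then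
`H̄^↓_α(AB|C)_ρ ≥ H̄^↓_β(A|BC)_ρ + H̄^↓_γ(B|C)_{ρ_BC}`, and the inequality is reversed
if `(α−1)(β−1)(γ−1) < 0`. -/
theorem stmt14 {mA mB mC : Type*}
    [Fintype mA] [DecidableEq mA] [Fintype mB] [DecidableEq mB]
    [Fintype mC] [DecidableEq mC]
    (α β γ : ℝ)
    (hα : 0 < α ∧ α ≠ 1 ∧ α ≤ 2) (hβ : 0 < β ∧ β ≠ 1 ∧ β ≤ 2)
    (hγ : 0 < γ ∧ γ ≠ 1 ∧ γ ≤ 2)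
    (hrel : 1 / (1 - α) = 1 / (1 - β) + 1 / (1 - γ))
    (ρ : Matrix ((mA × mB) × mC) ((mA × mB) × mC) ℂ) (hρ : IsDensity ρ)
    (ρA_BC : Matrix (mA × (mB × mC)) (mA × (mB × mC)) ℂ)
    (hρA_BC : ρA_BC = Matrix.of fun x y =>
      ρ ((x.1, x.2.1), x.2.2) ((y.1, y.2.1), y.2.2))
    (ρBC : Matrix (mB × mC) (mB × mC) ℂ)
    (hρBC : ρBC = Matrix.of fun x y => ∑ a, ρ ((a, x.1), x.2) ((a, y.1), y.2)) :
    ((α - 1) * (β - 1) * (γ - 1) > 0 →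
      HPetzDown α ρ ≥ HPetzDown β ρA_BC + HPetzDown γ ρBC) ∧
    ((α - 1) * (β - 1) * (γ - 1) < 0 →
      HPetzDown α ρ ≤ HPetzDown β ρA_BC + HPetzDown γ ρBC) := by
  have hρ0 : ρ ≠ 0 := fun h => by simpa [h] using hρ.2
  exact stmt14_general α β γ hα.2.1 hβ.2 ⟨hγ.1.le, hγ.2.1⟩ hrel ρ hρ.1 hρ0
    ρA_BC hρA_BC ρBC hρBC
end

section
/- Let ρ be a positive definite density matrix and X a nonzero positive semidefinite matrix of the same size. Let J ⊆ ℝ be an open interval with 0 ∉ J, and let f, g : J → ℝ be differentiable functions satisfying x·g′(x) = g(x) and x·f′(x)·g(x) = −1 for all x ∈ J. Then the function x ↦ (1/x)·log Tr[(X ρ^{f(x)} X)^{g(x)}] is monotonically nondecreasing on J. -/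
open scoped Kronecker ComplexOrder
open Matrix

/-!
The differential equations force `g x = c x` and `f = d + 1 / g`, so with `s = 1 / g x` the function
is `c` times `s log T(s)`, where `T(s) = Tr[(Xᴴ ρ ^ (d + s) X) ^ (1 / s)]`. It thus suffices that
`s ↦ s log T(s)` is antitone on each side of `0`, and for this it suffices to compare `s` with `s₀`
when `|s - s₀| ≤ 1`.

Put `Y = ρ ^ ((d + s₀) / 2) X`, so that the two matrices are `Yᴴ Y` and `Yᴴ ρ ^ (s - s₀) Y`, and
choose an eigenbasis of `Yᴴ Y`, with eigenvalues `lᵢ`. Jensen's inequality with the squared overlaps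
of the two eigenbases as weights (Peierls) bounds `T(s)` by the sum of the `1 / s`-th powers of the
diagonal entries of `Yᴴ ρ ^ (s - s₀) Y` in this basis. Jensen's inequality for `r ↦ r ^ (s - s₀)`
compares these entries with `lᵢ qᵢ ^ (s - s₀)`, where `qᵢ` is the mean of the spectrum of `ρ` in the
normalised vector `Y vᵢ`. These vectors are orthonormal, hence `∑ qᵢ ≤ Tr ρ ≤ 1`, and Hölder's
inequality concludes. The signs of `s` and of `s - s₀` and the position of `s` relative to `1`
decide the directions of the three inequalities; one can always arrange that they agree.
-/

section ScalarInequalities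

lemma convexOn_rpow_of_nonpos {p : ℝ} (hp : p ≤ 0) :
    ConvexOn ℝ (Set.Ioi 0) fun x : ℝ => x ^ p := by
  have convexOn_log_mul : ConvexOn ℝ (Set.Ioi 0) fun x : ℝ => Real.log x * p := by
    simpa [Pi.neg_def, mul_comm p] using
      strictConcaveOn_log_Ioi.concaveOn.neg.smul (neg_nonneg.2 hp)
  have convexOn_exp_log_mul : ConvexOn ℝ (Set.Ioi 0) fun x : ℝ => Real.exp (Real.log x * p) :=
    ⟨convex_Ioi 0, fun x hx y hy a b ha hb hab =>
      (Real.exp_le_exp.2 (convexOn_log_mul.2 hx hy ha hb hab)).trans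
        (convexOn_exp.2 (Set.mem_univ _) (Set.mem_univ _) ha hb hab)⟩
  exact convexOn_exp_log_mul.congr fun x hx => (Real.rpow_def_of_pos hx p).symm

lemma convexOn_rpow_Ioi {p : ℝ} (hp : p ≤ 0 ∨ 1 ≤ p) :
    ConvexOn ℝ (Set.Ioi 0) fun x : ℝ => x ^ p :=
  hp.elim convexOn_rpow_of_nonpos fun hp =>
    (convexOn_rpow hp).subset Set.Ioi_subset_Ici_self (convex_Ioi 0)

variable {ι : Type*} [Fintype ι] {w z : ι → ℝ} {p : ℝ}

lemma convexOn_map_sum_le_of_support {s : Set ℝ} {φ : ℝ → ℝ} (hφ : ConvexOn ℝ s φ)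
    (hw : ∀ i, 0 ≤ w i) (hw1 : ∑ i, w i = 1) (hz : ∀ i, w i ≠ 0 → z i ∈ s) :
    φ (∑ i, w i * z i) ≤ ∑ i, w i * φ (z i) := by
  have sum_support (F : ι → ℝ) : ∑ i with w i ≠ 0, w i * F i = ∑ i, w i * F i :=
    Finset.sum_filter_of_ne fun i _ h => left_ne_zero_of_mul h
  have jensen := hφ.map_sum_le (t := {i | w i ≠ 0}) (fun i _ => hw i)
    (by rw [Finset.sum_filter_ne_zero, hw1]) fun i hi => hz i (Finset.mem_filter.1 hi).2
  simpa only [smul_eq_mul, sum_support] using jensen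

lemma rpow_sum_le_sum_mul_rpow (hw : ∀ i, 0 ≤ w i) (hw1 : ∑ i, w i = 1)
    (hz : ∀ i, w i ≠ 0 → 0 < z i) (hp : p ≤ 0 ∨ 1 ≤ p) :
    (∑ i, w i * z i) ^ p ≤ ∑ i, w i * z i ^ p :=
  convexOn_map_sum_le_of_support (convexOn_rpow_Ioi hp) hw hw1 hz

lemma sum_mul_rpow_le_rpow_sum (hw : ∀ i, 0 ≤ w i) (hw1 : ∑ i, w i = 1)
    (hz : ∀ i, w i ≠ 0 → 0 ≤ z i) (hp : p ∈ Set.Icc (0 : ℝ) 1) :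
    ∑ i, w i * z i ^ p ≤ (∑ i, w i * z i) ^ p := by
  simpa using convexOn_map_sum_le_of_support (Real.concaveOn_rpow hp.1 hp.2).neg hw hw1 hz

end ScalarInequalities

section Hoelder

variable {ι : Type*} {s : Finset ι} {x q : ι → ℝ} {θ : ℝ}

lemma rpow_sum_le_sum_rpow_mul_rpow (hx : ∀ i, 0 ≤ x i) (hq : ∀ i, 0 ≤ q i)
    (hqs : ∀ i ∈ s, 0 < q i) (hq1 : ∑ i ∈ s, q i ≤ 1) (hθ : 1 ≤ θ) :
    (∑ i ∈ s, x i) ^ θ ≤ ∑ i ∈ s, x i ^ θ * q i ^ (1 - θ) := by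
  have hθ0 : 0 < θ := by linarith
  have sum_nonneg : 0 ≤ ∑ i ∈ s, x i ^ θ * q i ^ (1 - θ) := Finset.sum_nonneg fun i _ =>
    mul_nonneg (Real.rpow_nonneg (hx i) _) (Real.rpow_nonneg (hq i) _)
  rw [← Real.le_rpow_inv_iff_of_pos (Finset.sum_nonneg fun i _ => hx i) sum_nonneg hθ0]
  calc ∑ i ∈ s, x i = ∑ i ∈ s, q i * (x i / q i) :=
        Finset.sum_congr rfl fun i hi => (mul_div_cancel₀ _ (hqs i hi).ne').symm
    _ ≤ (∑ i ∈ s, q i) ^ (1 - θ⁻¹) * (∑ i ∈ s, q i * (x i / q i) ^ θ) ^ θ⁻¹ :=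
        Real.inner_le_weight_mul_Lp_of_nonneg s hθ q _ hq fun i => div_nonneg (hx i) (hq i)
    _ ≤ 1 * (∑ i ∈ s, q i * (x i / q i) ^ θ) ^ θ⁻¹ := by
        gcongr
        · exact Real.rpow_nonneg (Finset.sum_nonneg fun i _ => mul_nonneg (hq i)
            (Real.rpow_nonneg (div_nonneg (hx i) (hq i)) _)) _
        · exact Real.rpow_le_one (Finset.sum_nonneg fun i _ => hq i) hq1
            (sub_nonneg.2 (inv_le_one_of_one_le₀ hθ))
    _ = (∑ i ∈ s, x i ^ θ * q i ^ (1 - θ)) ^ θ⁻¹ := by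
        rw [one_mul]
        congr 1
        refine Finset.sum_congr rfl fun i hi => ?_
        rw [Real.div_rpow (hx i) (hq i), Real.rpow_sub (hqs i hi), Real.rpow_one]
        ring

lemma sum_rpow_mul_rpow_le_rpow_sum (hx : ∀ i, 0 ≤ x i) (hq : ∀ i, 0 ≤ q i)
    (hqs : ∀ i ∈ s, 0 < q i) (hq1 : ∑ i ∈ s, q i ≤ 1) (hθ0 : 0 < θ) (hθ1 : θ ≤ 1) :
    ∑ i ∈ s, x i ^ θ * q i ^ (1 - θ) ≤ (∑ i ∈ s, x i) ^ θ := by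
  have nonneg (i : ι) : 0 ≤ x i ^ θ * q i ^ (1 - θ) :=
    mul_nonneg (Real.rpow_nonneg (hx i) _) (Real.rpow_nonneg (hq i) _)
  rw [← Real.rpow_inv_le_iff_of_pos (Finset.sum_nonneg fun i _ => nonneg i)
    (Finset.sum_nonneg fun i _ => hx i) hθ0]
  refine (rpow_sum_le_sum_rpow_mul_rpow nonneg hq hqs hq1
    (one_le_inv_iff₀.2 ⟨hθ0, hθ1⟩)).trans_eq (Finset.sum_congr rfl fun i hi => ?_)
  rw [Real.mul_rpow (Real.rpow_nonneg (hx i) _) (Real.rpow_nonneg (hq i) _),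
    Real.rpow_rpow_inv (hx i) hθ0.ne', ← Real.rpow_mul (hq i), mul_assoc,
    ← Real.rpow_add (hqs i hi)]
  have exponent_eq_zero : (1 - θ) * θ⁻¹ + (1 - θ⁻¹) = 0 := by field_simp; ring
  rw [exponent_eq_zero, Real.rpow_zero, mul_one]

end Hoelder

section WeightedGram

variable {κ m : Type*} [Fintype κ] [DecidableEq κ]

/-- The Gram matrix `Aᴴ diag(a) A` of the columns of `A` for the inner product with weights `a`.
In an eigenbasis of `ρ` the matrices `Xᴴ ρ ^ t X` are of this form. -/
noncomputable def weightedGram (A : Matrix κ m ℂ) (a : κ → ℝ) : Matrix m m ℂ :=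
  Aᴴ * diagonal (fun k => (a k : ℂ)) * A

lemma weightedGram_one (A : Matrix κ m ℂ) : weightedGram A 1 = Aᴴ * A := by
  simp [weightedGram]

lemma weightedGram_apply (A : Matrix κ m ℂ) (a : κ → ℝ) (i j : m) :
    weightedGram A a i j = ∑ k, star (A k i) * a k * A k j := by
  rw [weightedGram, mul_apply]
  simp only [mul_diagonal, conjTranspose_apply]

lemma weightedGram_apply_self (A : Matrix κ m ℂ) (a : κ → ℝ) (i : m) :
    weightedGram A a i i = ((∑ k, Complex.normSq (A k i) * a k : ℝ) : ℂ) := by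
  simp only [weightedGram_apply, Complex.ofReal_sum, Complex.ofReal_mul,
    Complex.normSq_eq_conj_mul_self, RCLike.star_def, mul_right_comm]

lemma weightedGram_diagonal_sqrt_mul (A : Matrix κ m ℂ) {a : κ → ℝ} (ha : 0 ≤ a) (b : κ → ℝ) :
    weightedGram (diagonal (fun k => (√(a k) : ℂ)) * A) b = weightedGram A (a * b) := by
  ext i j
  simp only [weightedGram_apply, diagonal_mul, star_mul', RCLike.star_def, Complex.conj_ofReal,
    Pi.mul_apply]
  refine Finset.sum_congr rfl fun k _ => ?_
  calc √(a k) * (starRingEnd ℂ) (A k i) * b k * (√(a k) * A k j)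
      = (starRingEnd ℂ) (A k i) * ((√(a k) * √(a k) : ℝ) * b k) * A k j := by push_cast; ring
    _ = (starRingEnd ℂ) (A k i) * (a k * b k : ℝ) * A k j := by
        rw [Real.mul_self_sqrt (ha k), Complex.ofReal_mul]

lemma weightedGram_mul [Fintype m] {l : Type*} (A : Matrix κ m ℂ) (B : Matrix m l ℂ) (a : κ → ℝ) :
    weightedGram (A * B) a = Bᴴ * weightedGram A a * B := by
  simp only [weightedGram, conjTranspose_mul, Matrix.mul_assoc]

lemma posSemidef_weightedGram [Finite m] (A : Matrix κ m ℂ) {a : κ → ℝ} (ha : 0 ≤ a) :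
    (weightedGram A a).PosSemidef :=
  (PosSemidef.diagonal fun k => Complex.zero_le_real.2 (ha k)).conjTranspose_mul_mul_same A

lemma weightedGram_mulVec_eq_zero_iff [Fintype m] (A : Matrix κ m ℂ) {a : κ → ℝ}
    (ha : ∀ k, 0 < a k) (y : m → ℂ) : weightedGram A a *ᵥ y = 0 ↔ A *ᵥ y = 0 := by
  refine ⟨fun h => ?_, fun h => by rw [weightedGram, ← mulVec_mulVec, h, mulVec_zero]⟩
  have diagonal_posDef : (diagonal fun k => (a k : ℂ)).PosDef :=
    PosDef.diagonal fun k => Complex.zero_lt_real.2 (ha k)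
  by_contra hy
  refine (diagonal_posDef.dotProduct_mulVec_pos hy).ne' ?_
  rw [star_mulVec, ← dotProduct_mulVec, mulVec_mulVec, mulVec_mulVec, ← weightedGram, h,
    dotProduct_zero]

end WeightedGram

section ColMean

variable {κ m : Type*} [Fintype κ]

/-- The average of `r` over the rows of column `i` of `Z`, row `k` being weighted by `|Z k i| ^ 2`.
It is the `qᵢ` above if `r` lists the spectrum of `ρ`, and is `0` if the column vanishes. -/
noncomputable def colMean (Z : Matrix κ m ℂ) (r : κ → ℝ) (i : m) : ℝ :=
  (∑ k, Complex.normSq (Z k i) * r k) / ∑ k, Complex.normSq (Z k i)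

variable {Z : Matrix κ m ℂ} {r : κ → ℝ} {i : m} {p : ℝ}

lemma colMean_eq_sum : colMean Z r i =
    ∑ k, Complex.normSq (Z k i) / (∑ k, Complex.normSq (Z k i)) * r k := by
  rw [colMean, Finset.sum_div]
  exact Finset.sum_congr rfl fun k _ => (div_mul_eq_mul_div _ _ _).symm

lemma colMean_nonneg (hr : ∀ k, 0 ≤ r k) : 0 ≤ colMean Z r i :=
  div_nonneg (Finset.sum_nonneg fun k _ => mul_nonneg (Complex.normSq_nonneg _) (hr k))
    (Finset.sum_nonneg fun _ _ => Complex.normSq_nonneg _)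

lemma colMean_pos (hr : ∀ k, 0 < r k) (hZ : 0 < ∑ k, Complex.normSq (Z k i)) :
    0 < colMean Z r i := by
  obtain ⟨k, -, hk⟩ := Finset.exists_lt_of_sum_lt (Finset.sum_const_zero.trans_lt hZ)
  exact div_pos (Finset.sum_pos' (fun k _ => mul_nonneg (Complex.normSq_nonneg _) (hr k).le)
    ⟨k, Finset.mem_univ k, mul_pos hk (hr k)⟩) hZ

lemma rpow_colMean_le (hr : ∀ k, 0 < r k) (hZ : 0 < ∑ k, Complex.normSq (Z k i))
    (hp : p ≤ 0 ∨ 1 ≤ p) : colMean Z r i ^ p ≤ colMean Z (fun k => r k ^ p) i := by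
  simp only [colMean_eq_sum]
  exact rpow_sum_le_sum_mul_rpow (fun k => div_nonneg (Complex.normSq_nonneg _) hZ.le)
    (by rw [← Finset.sum_div, div_self hZ.ne']) (fun k _ => hr k) hp

lemma colMean_rpow_le (hr : ∀ k, 0 ≤ r k) (hZ : 0 < ∑ k, Complex.normSq (Z k i))
    (hp : p ∈ Set.Icc (0 : ℝ) 1) : colMean Z (fun k => r k ^ p) i ≤ colMean Z r i ^ p := by
  simp only [colMean_eq_sum]
  exact sum_mul_rpow_le_rpow_sum (fun k => div_nonneg (Complex.normSq_nonneg _) hZ.le)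
    (by rw [← Finset.sum_div, div_self hZ.ne']) (fun k _ => hr k) hp

variable [DecidableEq m] {l : m → ℝ}

lemma sum_normSq_col_eq (h : Zᴴ * Z = diagonal fun i => (l i : ℂ)) (i : m) :
    ∑ k, Complex.normSq (Z k i) = l i := by
  classical
  have := weightedGram_apply_self Z 1 i
  rw [weightedGram_one, h, diagonal_apply_eq] at this
  simpa using (Complex.ofReal_injective this).symm

lemma nonneg_of_conjTranspose_mul_self_eq_diagonal
    (h : Zᴴ * Z = diagonal fun i => (l i : ℂ)) (i : m) : 0 ≤ l i :=
  (Finset.sum_nonneg fun _ _ => Complex.normSq_nonneg _).trans_eq (sum_normSq_col_eq h i)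

variable [Fintype m]

lemma isStarProjection_weightedGram_conjTranspose_inv
    (h : Zᴴ * Z = diagonal fun i => (l i : ℂ)) :
    IsStarProjection (weightedGram Zᴴ l⁻¹) := by
  refine ⟨?_, (posSemidef_weightedGram Zᴴ fun i =>
    inv_nonneg.2 (nonneg_of_conjTranspose_mul_self_eq_diagonal h i)).isHermitian⟩
  have inv_mul_mul_inv (i : m) : (l i)⁻¹ * l i * (l i)⁻¹ = (l i)⁻¹ := by
    simpa only [inv_inv] using mul_inv_mul_cancel (l i)⁻¹
  calc weightedGram Zᴴ l⁻¹ * weightedGram Zᴴ l⁻¹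
      = Z * (diagonal (fun i => ((l i)⁻¹ : ℂ)) * (Zᴴ * Z) * diagonal fun i => ((l i)⁻¹ : ℂ)) *
          Zᴴ := by
        simp only [weightedGram, conjTranspose_conjTranspose, Matrix.mul_assoc, Pi.inv_apply,
          Complex.ofReal_inv]
    _ = weightedGram Zᴴ l⁻¹ := by
        simp only [h, diagonal_mul_diagonal, ← Complex.ofReal_inv, ← Complex.ofReal_mul,
          inv_mul_mul_inv, weightedGram, conjTranspose_conjTranspose, Pi.inv_apply]

-- Bessel: `Q = Z diag(l)⁻¹ Zᴴ` is a projection, hence `Q k k = ∑ j, |Q j k| ^ 2 ≥ |Q k k| ^ 2`.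
lemma sum_normSq_div_le_one (h : Zᴴ * Z = diagonal fun i => (l i : ℂ)) (k : κ) :
    ∑ i, Complex.normSq (Z k i) / l i ≤ 1 := by
  classical
  set Q := weightedGram Zᴴ l⁻¹ with hQ
  set b := ∑ i, Complex.normSq (Z k i) / l i with hb
  have Q_apply_self : Q k k = b := by
    simp [hQ, hb, weightedGram_apply_self, div_eq_mul_inv]
  have Q_conjTranspose_mul_self : Qᴴ * Q = Q :=
    let hQ := isStarProjection_weightedGram_conjTranspose_inv h
    (congrArg (· * Q) hQ.isSelfAdjoint.star_eq).trans hQ.isIdempotentElem.eq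
  have b_eq_sum : b = ∑ j, Complex.normSq (Q j k) := by
    have := weightedGram_apply_self Q 1 k
    rw [weightedGram_one, Q_conjTranspose_mul_self, Q_apply_self] at this
    simpa using Complex.ofReal_injective this
  have sq_le : b ^ 2 ≤ b :=
    calc b ^ 2 = Complex.normSq (Q k k) := by rw [Q_apply_self, Complex.normSq_ofReal, sq]
      _ ≤ ∑ j, Complex.normSq (Q j k) :=
          Finset.single_le_sum (f := fun j => Complex.normSq (Q j k))
            (fun _ _ => Complex.normSq_nonneg _) (Finset.mem_univ k)
      _ = b := b_eq_sum.symm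
  nlinarith

lemma sum_colMean_le (h : Zᴴ * Z = diagonal fun i => (l i : ℂ)) (hr : ∀ k, 0 ≤ r k) :
    ∑ i, colMean Z r i ≤ ∑ k, r k := by
  simp only [colMean_eq_sum, sum_normSq_col_eq h]
  rw [Finset.sum_comm]
  refine Finset.sum_le_sum fun k _ => ?_
  rw [← Finset.sum_mul]
  exact mul_le_of_le_one_left (hr k) (sum_normSq_div_le_one h k)

end ColMean

section DoublyStochastic

variable {m : Type*} [Fintype m] {E : Type*} [NormedAddCommGroup E] [InnerProductSpace ℂ E]

/-- The matrix of squared overlaps `|⟨v j, u i⟩| ^ 2` of two orthonormal bases. It is doubly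
stochastic, and expresses the diagonal entries of a Hermitian matrix in the basis `u` as averages of
its eigenvalues when `v` is an eigenbasis. -/
noncomputable def overlap (u v : OrthonormalBasis m ℂ E) : Matrix m m ℝ :=
  of fun i j => ‖inner ℂ (v j) (u i)‖ ^ 2

lemma overlap_comm_apply (u v : OrthonormalBasis m ℂ E) (i j : m) :
    overlap u v i j = overlap v u j i := by
  simp only [overlap, of_apply, norm_inner_symm (v j) (u i)]

variable [DecidableEq m]

lemma overlap_mem_doublyStochastic (u v : OrthonormalBasis m ℂ E) :
    overlap u v ∈ doublyStochastic ℝ m :=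
  mem_doublyStochastic_iff_sum.2 ⟨fun _ _ => sq_nonneg _,
    fun i => by simp [overlap, v.sum_sq_norm_inner_right],
    fun j => by simp [overlap, u.sum_sq_norm_inner_left]⟩

lemma sum_filter_sum_mul_of_mem_doublyStochastic {D : Matrix m m ℝ}
    (hD : D ∈ doublyStochastic ℝ m) {p q : m → Prop} [DecidablePred p] [DecidablePred q]
    (hpq : ∀ i j, D i j ≠ 0 → (p i ↔ q j)) (φ : m → ℝ) :
    ∑ i with p i, ∑ j, D i j * φ j = ∑ j with q j, φ j := by
  have ite_comm (i j : m) :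
      (if p i then D i j * φ j else 0) = if q j then D i j * φ j else 0 := by
    by_cases hij : D i j = 0
    · simp [hij]
    · simp [hpq i j hij]
  calc ∑ i with p i, ∑ j, D i j * φ j
      = ∑ i, ∑ j, if p i then D i j * φ j else 0 := by
        rw [Finset.sum_filter]
        exact Finset.sum_congr rfl fun i _ => by split_ifs <;> simp
    _ = ∑ j, ∑ i, if q j then D i j * φ j else 0 := by
        simp only [ite_comm]
        exact Finset.sum_comm
    _ = ∑ j with q j, φ j := by
        rw [Finset.sum_filter]
        refine Finset.sum_congr rfl fun j _ => ?_
        split_ifs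
        · rw [← Finset.sum_mul, sum_col_of_mem_doublyStochastic hD, one_mul]
        · exact Finset.sum_const_zero

end DoublyStochastic

section Peierls

variable {m : Type*} [Fintype m] [DecidableEq m] {A B : Matrix m m ℂ} {t : ℝ}

lemma trace_matPow_re (hA : A.IsHermitian) (t : ℝ) :
    (trace (matPow A t)).re = ∑ i with 0 < hA.eigenvalues i, hA.eigenvalues i ^ t := by
  rw [matPow, dif_pos hA, trace_mul_cycle, Unitary.coe_star_mul_self, one_mul, trace_diagonal,
    ← Complex.ofReal_sum, Complex.ofReal_re, ← Finset.sum_filter]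

lemma conjTranspose_eigenvectorUnitary_mul_mul (hA : A.IsHermitian) :
    (hA.eigenvectorUnitary : Matrix m m ℂ)ᴴ * A * hA.eigenvectorUnitary =
      diagonal fun i => (hA.eigenvalues i : ℂ) := by
  have := hA.conjStarAlgAut_star_eigenvectorUnitary
  rwa [Unitary.conjStarAlgAut_star_apply] at this

lemma mul_eigenvectorUnitary_conjTranspose_mul_self {κ : Type*} [Fintype κ] (Y : Matrix κ m ℂ)
    (hY : (Yᴴ * Y).IsHermitian) :
    (Y * (hY.eigenvectorUnitary : Matrix m m ℂ))ᴴ * (Y * (hY.eigenvectorUnitary : Matrix m m ℂ)) =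
      diagonal fun i => (hY.eigenvalues i : ℂ) := by
  rw [← conjTranspose_eigenvectorUnitary_mul_mul hY, conjTranspose_mul]
  simp only [Matrix.mul_assoc]

lemma weightedGram_eigenvectorUnitary (hB : B.IsHermitian) :
    weightedGram (hB.eigenvectorUnitary : Matrix m m ℂ)ᴴ hB.eigenvalues = B := by
  have := hB.spectral_theorem
  rw [Unitary.conjStarAlgAut_apply] at this
  rw [weightedGram, conjTranspose_conjTranspose]
  exact this.symm

lemma conjTranspose_eigenvectorUnitary_mul_mul_apply_self (hA : A.IsHermitian)
    (hB : B.IsHermitian) (i : m) :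
    ((hA.eigenvectorUnitary : Matrix m m ℂ)ᴴ * B * hA.eigenvectorUnitary) i i =
      ((∑ j, overlap hA.eigenvectorBasis hB.eigenvectorBasis i j * hB.eigenvalues j : ℝ) : ℂ) := by
  conv_lhs => rw [← weightedGram_eigenvectorUnitary hB, ← weightedGram_mul, weightedGram_apply_self]
  congr! 3 with j
  rw [overlap, of_apply, Complex.normSq_eq_norm_sq]
  simp only [mul_apply, conjTranspose_apply, IsHermitian.eigenvectorUnitary_apply,
    EuclideanSpace.inner_eq_star_dotProduct, dotProduct, Pi.star_apply, mul_comm]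

lemma overlap_eigenvectorBasis_eq_zero (hA : A.IsHermitian) (hB : B.IsHermitian)
    (hker : ∀ y, A *ᵥ y = 0 → B *ᵥ y = 0) {i j : m} (hi : hA.eigenvalues i = 0)
    (hj : hB.eigenvalues j ≠ 0) :
    overlap hA.eigenvectorBasis hB.eigenvectorBasis i j = 0 := by
  set x := (hA.eigenvectorBasis i).ofLp
  set y := (hB.eigenvectorBasis j).ofLp
  have mulVec_eq_zero : B *ᵥ x = 0 := hker _ <| by
    rw [hA.mulVec_eigenvectorBasis, hi, zero_smul]
  have smul_dotProduct_eq_zero : hB.eigenvalues j • (x ⬝ᵥ star y) = 0 :=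
    calc hB.eigenvalues j • (x ⬝ᵥ star y) = x ⬝ᵥ star (B *ᵥ y) := by
          rw [hB.mulVec_eigenvectorBasis, star_smul, star_trivial (hB.eigenvalues j),
            dotProduct_smul]
      _ = B *ᵥ x ⬝ᵥ star y := by
          rw [star_mulVec, hB.eq, dotProduct_comm, ← dotProduct_mulVec, dotProduct_comm]
      _ = 0 := by rw [mulVec_eq_zero, zero_dotProduct]
  have dotProduct_eq_zero := (smul_eq_zero.1 smul_dotProduct_eq_zero).resolve_left hj
  simp [overlap, EuclideanSpace.inner_eq_star_dotProduct, x, y, dotProduct_eq_zero]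

lemma eigenvalues_pos_iff_of_overlap_ne_zero (hA : A.PosSemidef) (hB : B.PosSemidef)
    (hker : ∀ y, A *ᵥ y = 0 ↔ B *ᵥ y = 0) {i j : m}
    (hij : overlap hA.isHermitian.eigenvectorBasis hB.isHermitian.eigenvectorBasis i j ≠ 0) :
    0 < hA.isHermitian.eigenvalues i ↔ 0 < hB.isHermitian.eigenvalues j := by
  rw [(hA.eigenvalues_nonneg i).lt_iff_ne', (hB.eigenvalues_nonneg j).lt_iff_ne', not_iff_not]
  constructor <;> intro h
  · by_contra hj
    exact hij (overlap_eigenvectorBasis_eq_zero _ _ (fun y => (hker y).1) h hj)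
  · by_contra hi
    rw [overlap_comm_apply] at hij
    exact hij (overlap_eigenvectorBasis_eq_zero _ _ (fun y => (hker y).2) h hi)

lemma sum_rpow_diag_le_trace_matPow (hA : A.PosSemidef) (hB : B.PosSemidef)
    (hker : ∀ y, A *ᵥ y = 0 ↔ B *ᵥ y = 0) (ht : t ≤ 0 ∨ 1 ≤ t) :
    ∑ i with 0 < hA.isHermitian.eigenvalues i,
      (((hA.isHermitian.eigenvectorUnitary : Matrix m m ℂ)ᴴ * B *
        hA.isHermitian.eigenvectorUnitary) i i).re ^ t ≤ (trace (matPow B t)).re := by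
  set D := overlap hA.isHermitian.eigenvectorBasis hB.isHermitian.eigenvectorBasis
  have hD : D ∈ doublyStochastic ℝ m := overlap_mem_doublyStochastic _ _
  have pos_iff (i j : m) (hij : D i j ≠ 0) := eigenvalues_pos_iff_of_overlap_ne_zero hA hB hker hij
  rw [trace_matPow_re hB.isHermitian, ← sum_filter_sum_mul_of_mem_doublyStochastic hD pos_iff]
  refine Finset.sum_le_sum fun i hi => ?_
  rw [conjTranspose_eigenvectorUnitary_mul_mul_apply_self _ hB.isHermitian, Complex.ofReal_re]
  exact rpow_sum_le_sum_mul_rpow (fun j => nonneg_of_mem_doublyStochastic hD)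
    (sum_row_of_mem_doublyStochastic hD i)
    (fun j hij => (pos_iff i j hij).1 (Finset.mem_filter.1 hi).2) ht

lemma trace_matPow_le_sum_rpow_diag (hA : A.PosSemidef) (hB : B.PosSemidef)
    (hker : ∀ y, A *ᵥ y = 0 ↔ B *ᵥ y = 0) (ht : t ∈ Set.Icc (0 : ℝ) 1) :
    (trace (matPow B t)).re ≤ ∑ i with 0 < hA.isHermitian.eigenvalues i,
      (((hA.isHermitian.eigenvectorUnitary : Matrix m m ℂ)ᴴ * B *
        hA.isHermitian.eigenvectorUnitary) i i).re ^ t := by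
  set D := overlap hA.isHermitian.eigenvectorBasis hB.isHermitian.eigenvectorBasis
  have hD : D ∈ doublyStochastic ℝ m := overlap_mem_doublyStochastic _ _
  have pos_iff (i j : m) (hij : D i j ≠ 0) := eigenvalues_pos_iff_of_overlap_ne_zero hA hB hker hij
  rw [trace_matPow_re hB.isHermitian, ← sum_filter_sum_mul_of_mem_doublyStochastic hD pos_iff]
  refine Finset.sum_le_sum fun i _ => ?_
  rw [conjTranspose_eigenvectorUnitary_mul_mul_apply_self _ hB.isHermitian, Complex.ofReal_re]
  exact sum_mul_rpow_le_rpow_sum (fun j => nonneg_of_mem_doublyStochastic hD)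
    (sum_row_of_mem_doublyStochastic hD i) (fun j _ => hB.eigenvalues_nonneg j) ht

end Peierls

section Comparison

variable {κ m : Type*} [Fintype κ] [DecidableEq κ] [DecidableEq m]
  {Z : Matrix κ m ℂ} {l : m → ℝ} {r : κ → ℝ} {s s₀ : ℝ}

lemma weightedGram_apply_self_re (h : Zᴴ * Z = diagonal fun i => (l i : ℂ)) {i : m}
    (hi : 0 < l i) (a : κ → ℝ) : (weightedGram Z a i i).re = l i * colMean Z a i := by
  rw [weightedGram_apply_self, Complex.ofReal_re, colMean, sum_normSq_col_eq h,
    mul_div_cancel₀ _ hi.ne']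

lemma rpow_inv_rpow_mul_rpow {x q : ℝ} (hx : 0 ≤ x) (hq : 0 ≤ q) (hs : s ≠ 0) (hs₀ : s₀ ≠ 0) :
    (x ^ s₀⁻¹) ^ (s₀ / s) * q ^ (1 - s₀ / s) = (x * q ^ (s - s₀)) ^ s⁻¹ := by
  rw [Real.mul_rpow hx (Real.rpow_nonneg hq _), ← Real.rpow_mul hx, ← Real.rpow_mul hq,
    show s₀⁻¹ * (s₀ / s) = s⁻¹ by field_simp, show (s - s₀) * s⁻¹ = 1 - s₀ / s by field_simp]

variable [Fintype m]

lemma rpow_sum_le_sum_rpow_weightedGram (h : Zᴴ * Z = diagonal fun i => (l i : ℂ))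
    (hr : ∀ k, 0 < r k) (hr1 : ∑ k, r k ≤ 1)
    (hs : 0 < s ∧ s ≤ s₀ ∨ s < 0 ∧ s₀ ≤ s ∧ s ≤ s₀ + 1) :
    (∑ i with 0 < l i, l i ^ s₀⁻¹) ^ (s₀ / s) ≤
      ∑ i with 0 < l i, (weightedGram Z (fun k => r k ^ (s - s₀)) i i).re ^ s⁻¹ := by
  have one_le : 1 ≤ s₀ / s := by
    rcases hs with ⟨hs0, hs⟩ | ⟨hs0, hs, -⟩
    · rwa [one_le_div hs0]
    · rwa [one_le_div_of_neg hs0]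
  have hl := nonneg_of_conjTranspose_mul_self_eq_diagonal h
  have hq (i : m) : 0 ≤ colMean Z r i := colMean_nonneg fun k => (hr k).le
  have sum_pos {i : m} (hi : 0 < l i) : 0 < ∑ k, Complex.normSq (Z k i) :=
    hi.trans_eq (sum_normSq_col_eq h i).symm
  calc (∑ i with 0 < l i, l i ^ s₀⁻¹) ^ (s₀ / s)
      ≤ ∑ i with 0 < l i, (l i ^ s₀⁻¹) ^ (s₀ / s) * colMean Z r i ^ (1 - s₀ / s) :=
        rpow_sum_le_sum_rpow_mul_rpow (fun i => Real.rpow_nonneg (hl i) _) hq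
          (fun i hi => colMean_pos hr (sum_pos (Finset.mem_filter.1 hi).2))
          ((Finset.sum_le_univ_sum_of_nonneg hq).trans
            ((sum_colMean_le h fun k => (hr k).le).trans hr1)) one_le
    _ = ∑ i with 0 < l i, (l i * colMean Z r i ^ (s - s₀)) ^ s⁻¹ :=
        Finset.sum_congr rfl fun i _ => rpow_inv_rpow_mul_rpow (hl i) (hq i) (by grind) (by grind)
    _ ≤ ∑ i with 0 < l i, (weightedGram Z (fun k => r k ^ (s - s₀)) i i).re ^ s⁻¹ := by
        refine Finset.sum_le_sum fun i hi => ?_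
        replace hi := (Finset.mem_filter.1 hi).2
        rw [weightedGram_apply_self_re h hi]
        rcases hs with ⟨hs0, hs⟩ | ⟨hs0, hs, hs1⟩
        · gcongr
          · exact mul_nonneg hi.le (Real.rpow_nonneg (hq i) _)
          · exact rpow_colMean_le hr (sum_pos hi) (.inl (sub_nonpos.2 hs))
        · refine Real.rpow_le_rpow_of_nonpos (mul_pos hi (colMean_pos
            (fun k => Real.rpow_pos_of_pos (hr k) _) (sum_pos hi))) ?_ (inv_nonpos.2 hs0.le)
          gcongr
          exact colMean_rpow_le (fun k => (hr k).le) (sum_pos hi)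
            ⟨sub_nonneg.2 hs, sub_le_iff_le_add'.2 hs1⟩

lemma sum_rpow_weightedGram_le_rpow_sum (h : Zᴴ * Z = diagonal fun i => (l i : ℂ))
    (hr : ∀ k, 0 < r k) (hr1 : ∑ k, r k ≤ 1) (hs₀ : 0 < s₀) (hs : s₀ ≤ s) (hs1 : s ≤ s₀ + 1) :
    ∑ i with 0 < l i, (weightedGram Z (fun k => r k ^ (s - s₀)) i i).re ^ s⁻¹ ≤
      (∑ i with 0 < l i, l i ^ s₀⁻¹) ^ (s₀ / s) := by
  have hs_pos : 0 < s := hs₀.trans_le hs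
  have hl := nonneg_of_conjTranspose_mul_self_eq_diagonal h
  have hq (i : m) : 0 ≤ colMean Z r i := colMean_nonneg fun k => (hr k).le
  have sum_pos {i : m} (hi : 0 < l i) : 0 < ∑ k, Complex.normSq (Z k i) :=
    hi.trans_eq (sum_normSq_col_eq h i).symm
  calc ∑ i with 0 < l i, (weightedGram Z (fun k => r k ^ (s - s₀)) i i).re ^ s⁻¹
      ≤ ∑ i with 0 < l i, (l i * colMean Z r i ^ (s - s₀)) ^ s⁻¹ := by
        refine Finset.sum_le_sum fun i hi => ?_
        replace hi := (Finset.mem_filter.1 hi).2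
        rw [weightedGram_apply_self_re h hi]
        gcongr
        · exact mul_nonneg hi.le (colMean_nonneg fun k => Real.rpow_nonneg (hr k).le _)
        · exact colMean_rpow_le (fun k => (hr k).le) (sum_pos hi)
            ⟨sub_nonneg.2 hs, sub_le_iff_le_add'.2 hs1⟩
    _ = ∑ i with 0 < l i, (l i ^ s₀⁻¹) ^ (s₀ / s) * colMean Z r i ^ (1 - s₀ / s) :=
        Finset.sum_congr rfl fun i _ =>
          (rpow_inv_rpow_mul_rpow (hl i) (hq i) hs_pos.ne' hs₀.ne').symm
    _ ≤ (∑ i with 0 < l i, l i ^ s₀⁻¹) ^ (s₀ / s) :=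
        sum_rpow_mul_rpow_le_rpow_sum (fun i => Real.rpow_nonneg (hl i) _) hq
          (fun i hi => colMean_pos hr (sum_pos (Finset.mem_filter.1 hi).2))
          ((Finset.sum_le_univ_sum_of_nonneg hq).trans
            ((sum_colMean_le h fun k => (hr k).le).trans hr1))
          (div_pos hs₀ hs_pos) ((div_le_one hs_pos).2 hs)

lemma rpow_trace_matPow_le_trace_matPow_weightedGram (Y : Matrix κ m ℂ) (hr : ∀ k, 0 < r k)
    (hr1 : ∑ k, r k ≤ 1)
    (hs : (0 < s ∧ s ≤ 1 ∧ s ≤ s₀) ∨ s < 0 ∧ s₀ ≤ s ∧ s ≤ s₀ + 1) :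
    (trace (matPow (Yᴴ * Y) s₀⁻¹)).re ^ (s₀ / s) ≤
      (trace (matPow (weightedGram Y fun k => r k ^ (s - s₀)) s⁻¹)).re := by
  have ha (k : κ) : 0 < r k ^ (s - s₀) := Real.rpow_pos_of_pos (hr k) _
  have hY := posSemidef_conjTranspose_mul_self Y
  rw [trace_matPow_re hY.isHermitian]
  refine (rpow_sum_le_sum_rpow_weightedGram
    (mul_eigenvectorUnitary_conjTranspose_mul_self Y hY.isHermitian) hr hr1 (by grind)).trans ?_
  rw [weightedGram_mul]
  exact sum_rpow_diag_le_trace_matPow hY (posSemidef_weightedGram Y fun k => (ha k).le)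
    (fun y => (conjTranspose_mul_self_mulVec_eq_zero Y y).trans
      (weightedGram_mulVec_eq_zero_iff Y ha y).symm)
    (hs.symm.imp (fun h => inv_nonpos.2 h.1.le) fun h => one_le_inv_iff₀.2 ⟨h.1, h.2.1⟩)

lemma trace_matPow_weightedGram_le_rpow_trace_matPow (Y : Matrix κ m ℂ) (hr : ∀ k, 0 < r k)
    (hr1 : ∑ k, r k ≤ 1) (hs₀ : 0 < s₀) (hs : 1 ≤ s) (hs₀s : s₀ ≤ s) (hs1 : s ≤ s₀ + 1) :
    (trace (matPow (weightedGram Y fun k => r k ^ (s - s₀)) s⁻¹)).re ≤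
      (trace (matPow (Yᴴ * Y) s₀⁻¹)).re ^ (s₀ / s) := by
  have ha (k : κ) : 0 < r k ^ (s - s₀) := Real.rpow_pos_of_pos (hr k) _
  have hY := posSemidef_conjTranspose_mul_self Y
  rw [trace_matPow_re hY.isHermitian]
  refine le_trans ?_ (sum_rpow_weightedGram_le_rpow_sum
    (mul_eigenvectorUnitary_conjTranspose_mul_self Y hY.isHermitian) hr hr1 hs₀ hs₀s hs1)
  rw [weightedGram_mul]
  exact trace_matPow_le_sum_rpow_diag hY (posSemidef_weightedGram Y fun k => (ha k).le)
    (fun y => (conjTranspose_mul_self_mulVec_eq_zero Y y).trans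
      (weightedGram_mulVec_eq_zero_iff Y ha y).symm)
    ⟨inv_nonneg.2 (hs₀.trans_le hs₀s).le, inv_le_one_of_one_le₀ hs⟩

end Comparison

lemma antitoneOn_of_le_of_le_add_one {S : Set ℝ} (hS : S.OrdConnected) {F : ℝ → ℝ}
    (hF : ∀ a ∈ S, ∀ b ∈ S, a ≤ b → b ≤ a + 1 → F b ≤ F a) : AntitoneOn F S := by
  have le_of_le_add_nat (N : ℕ) : ∀ a ∈ S, ∀ b ∈ S, a ≤ b → b ≤ a + N → F b ≤ F a := by
    induction N with
    | zero => exact fun a ha b hb hab hN => hF a ha b hb hab (hN.trans (by simp))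
    | succ N ih =>
      intro a ha b hb hab hN
      push_cast at hN
      rcases le_total b (a + 1) with h | h
      · exact hF a ha b hb hab h
      · have hb1 : b - 1 ∈ S := hS.out ha hb ⟨by linarith, by linarith⟩
        exact (hF _ hb1 b hb (by linarith) (by linarith)).trans
          (ih a ha _ hb1 (by linarith) (by linarith))
  intro a ha b hb hab
  obtain ⟨N, hN⟩ := exists_nat_ge (b - a)
  exact le_of_le_add_nat N a ha b hb hab (by linarith)

section GramPowTrace

variable {κ m : Type*} [Fintype κ] [DecidableEq κ] [Fintype m] [DecidableEq m]

lemma trace_matPow_re_pos {M : Matrix m m ℂ} (hM : M.PosSemidef) (hM0 : M ≠ 0) (t : ℝ) :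
    0 < (trace (matPow M t)).re := by
  rw [trace_matPow_re hM.isHermitian]
  refine Finset.sum_pos (fun i hi => Real.rpow_pos_of_pos (Finset.mem_filter.1 hi).2 _) ?_
  obtain ⟨i, hi⟩ := Function.ne_iff.1 (mt hM.isHermitian.eigenvalues_eq_zero_iff.1 hM0)
  exact ⟨i, by simpa using (hM.eigenvalues_nonneg i).lt_of_ne' hi⟩

/-- The trace of `(Aᴴ R ^ (d + s) A) ^ (1 / s)` for `R = diag(r)`. The traces of the theorem take
this form with `s = 1 / g(x)`, because `f - 1 / g` is constant. -/
noncomputable def gramPowTrace (A : Matrix κ m ℂ) (r : κ → ℝ) (d s : ℝ) : ℝ :=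
  (trace (matPow (weightedGram A fun k => r k ^ (d + s)) s⁻¹)).re

variable {A : Matrix κ m ℂ} {r : κ → ℝ} {d s s₀ : ℝ}

lemma gramPowTrace_pos (hA : A ≠ 0) (hr : ∀ k, 0 < r k) : 0 < gramPowTrace A r d s := by
  have ha (k : κ) : 0 < r k ^ (d + s) := Real.rpow_pos_of_pos (hr k) _
  refine trace_matPow_re_pos (posSemidef_weightedGram A fun k => (ha k).le) (fun h => hA ?_) _
  refine ext_of_mulVec_single fun i => ?_
  rw [(weightedGram_mulVec_eq_zero_iff A ha _).1 (by rw [h, zero_mulVec]), zero_mulVec]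

lemma exists_gramPowTrace_eq (A : Matrix κ m ℂ) (hr : ∀ k, 0 < r k) (d s₀ : ℝ) :
    ∃ Y : Matrix κ m ℂ, gramPowTrace A r d s₀ = (trace (matPow (Yᴴ * Y) s₀⁻¹)).re ∧
      ∀ s, gramPowTrace A r d s =
        (trace (matPow (weightedGram Y fun k => r k ^ (s - s₀)) s⁻¹)).re := by
  have ha : 0 ≤ fun k => r k ^ (d + s₀) := fun k => Real.rpow_nonneg (hr k).le _
  refine ⟨diagonal (fun k => (√(r k ^ (d + s₀)) : ℂ)) * A, ?_, fun s => ?_⟩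
  · rw [← weightedGram_one, weightedGram_diagonal_sqrt_mul A ha, mul_one, gramPowTrace]
  · rw [weightedGram_diagonal_sqrt_mul A ha, gramPowTrace]
    congr! 5 with k
    rw [Pi.mul_apply, ← Real.rpow_add (hr k), add_add_sub_cancel]

lemma rpow_gramPowTrace_le (A : Matrix κ m ℂ) (hr : ∀ k, 0 < r k) (hr1 : ∑ k, r k ≤ 1)
    (hs : (0 < s ∧ s ≤ 1 ∧ s ≤ s₀) ∨ s < 0 ∧ s₀ ≤ s ∧ s ≤ s₀ + 1) :
    gramPowTrace A r d s₀ ^ (s₀ / s) ≤ gramPowTrace A r d s := by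
  obtain ⟨Y, hY₀, hY⟩ := exists_gramPowTrace_eq A hr d s₀
  rw [hY₀, hY]
  exact rpow_trace_matPow_le_trace_matPow_weightedGram Y hr hr1 hs

lemma gramPowTrace_le_rpow (A : Matrix κ m ℂ) (hr : ∀ k, 0 < r k) (hr1 : ∑ k, r k ≤ 1)
    (hs₀ : 0 < s₀) (hs : 1 ≤ s) (hs₀s : s₀ ≤ s) (hs1 : s ≤ s₀ + 1) :
    gramPowTrace A r d s ≤ gramPowTrace A r d s₀ ^ (s₀ / s) := by
  obtain ⟨Y, hY₀, hY⟩ := exists_gramPowTrace_eq A hr d s₀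
  rw [hY₀, hY]
  exact trace_matPow_weightedGram_le_rpow_trace_matPow Y hr hr1 hs₀ hs hs₀s hs1

lemma antitoneOn_mul_log_gramPowTrace_Ioi (hA : A ≠ 0) (hr : ∀ k, 0 < r k)
    (hr1 : ∑ k, r k ≤ 1) (d : ℝ) :
    AntitoneOn (fun s => s * Real.log (gramPowTrace A r d s)) (Set.Ioi 0) := by
  refine antitoneOn_of_le_of_le_add_one Set.ordConnected_Ioi
    fun a (ha : 0 < a) b (hb : 0 < b) hab hb1 => ?_
  have T_pos (s : ℝ) : 0 < gramPowTrace A r d s := gramPowTrace_pos hA hr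
  rcases le_total b 1 with h | h
  · have := Real.log_le_log (Real.rpow_pos_of_pos (T_pos b) _)
      (rpow_gramPowTrace_le A hr hr1 (.inl ⟨ha, hab.trans h, hab⟩))
    rw [Real.log_rpow (T_pos b), div_mul_eq_mul_div, div_le_iff₀' ha] at this
    exact this
  · have := Real.log_le_log (T_pos b) (gramPowTrace_le_rpow A hr hr1 ha h hab hb1)
    rw [Real.log_rpow (T_pos a), div_mul_eq_mul_div, le_div_iff₀' hb] at this
    exact this

lemma antitoneOn_mul_log_gramPowTrace_Iio (hA : A ≠ 0) (hr : ∀ k, 0 < r k)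
    (hr1 : ∑ k, r k ≤ 1) (d : ℝ) :
    AntitoneOn (fun s => s * Real.log (gramPowTrace A r d s)) (Set.Iio 0) := by
  refine antitoneOn_of_le_of_le_add_one Set.ordConnected_Iio fun a _ b (hb : b < 0) hab hb1 => ?_
  have T_pos (s : ℝ) : 0 < gramPowTrace A r d s := gramPowTrace_pos hA hr
  have := Real.log_le_log (Real.rpow_pos_of_pos (T_pos a) _)
    (rpow_gramPowTrace_le A hr hr1 (.inr ⟨hb, hab, hb1⟩))
  rwa [Real.log_rpow (T_pos a), div_mul_eq_mul_div, div_le_iff_of_neg' hb] at this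

end GramPowTrace

section SupportCoords

variable {n m : Type*} [Fintype n] [DecidableEq n] {ρ : Matrix n n ℂ}

/-- The coordinates of the columns of `X` along the eigenvectors of `ρ` with positive eigenvalue.
The other eigenvectors are left out so that the powers of `ρ` become positive weights. -/
noncomputable def supportCoords (hρ : ρ.IsHermitian) (X : Matrix n m ℂ) :
    Matrix {k // 0 < hρ.eigenvalues k} m ℂ :=
  ((hρ.eigenvectorUnitary : Matrix n n ℂ)ᴴ * X).submatrix Subtype.val id

lemma conjTranspose_mul_matPow_mul (hρ : ρ.IsHermitian) (X : Matrix n m ℂ) (t : ℝ) :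
    Xᴴ * matPow ρ t * X = weightedGram (supportCoords hρ X) fun k => hρ.eigenvalues k ^ t := by
  set W := (hρ.eigenvectorUnitary : Matrix n n ℂ)ᴴ * X with hW
  have eq_weightedGram : Xᴴ * matPow ρ t * X =
      weightedGram W fun k => if 0 < hρ.eigenvalues k then hρ.eigenvalues k ^ t else 0 := by
    rw [matPow, dif_pos hρ, star_eq_conjTranspose]
    simp only [weightedGram, hW, conjTranspose_mul, conjTranspose_conjTranspose, Matrix.mul_assoc]
  rw [eq_weightedGram]
  ext i j
  simp only [weightedGram_apply, apply_ite, Complex.ofReal_zero, mul_zero, ite_mul, zero_mul]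
  rw [← Finset.sum_filter]
  exact Finset.sum_subtype _ (by simp) _

lemma supportCoords_ne_zero (hρ : ρ.PosSemidef) {X : Matrix n m ℂ} (hX : ρ * X ≠ 0) :
    supportCoords hρ.isHermitian X ≠ 0 := by
  refine fun h => hX ?_
  have diagonal_mul_eq_zero : diagonal (fun k => (hρ.isHermitian.eigenvalues k : ℂ)) *
      ((hρ.isHermitian.eigenvectorUnitary : Matrix n n ℂ)ᴴ * X) = 0 := by
    ext k j
    rw [diagonal_mul]
    rcases (hρ.eigenvalues_nonneg k).eq_or_lt' with hk | hk
    · simp [hk]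
    · exact mul_eq_zero_of_right _ (congrFun₂ h ⟨k, hk⟩ j)
  conv_lhs => rw [← weightedGram_eigenvectorUnitary hρ.isHermitian, weightedGram, Matrix.mul_assoc,
    Matrix.mul_assoc, diagonal_mul_eq_zero, Matrix.mul_zero]

lemma sum_pos_eigenvalues_eq_trace_re (hρ : ρ.PosSemidef) :
    ∑ k : {k // 0 < hρ.isHermitian.eigenvalues k}, hρ.isHermitian.eigenvalues k = ρ.trace.re := by
  rw [hρ.isHermitian.trace_eq_sum_eigenvalues, Complex.re_sum]
  simp only [Complex.coe_algebraMap, Complex.ofReal_re]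
  rw [← Finset.sum_subtype {k | 0 < hρ.isHermitian.eigenvalues k} (by simp)
    hρ.isHermitian.eigenvalues]
  exact Finset.sum_filter_of_ne fun k _ hk => (hρ.eigenvalues_nonneg k).lt_of_ne' hk

end SupportCoords

section DifferentialEquation

variable {J : Set ℝ} {f g f' g' : ℝ → ℝ}

lemma exists_eq_const_of_hasDerivWithinAt_zero (hJ : J.OrdConnected)
    (hf : ∀ x ∈ J, HasDerivWithinAt f 0 J x) : ∃ c, ∀ x ∈ J, f x = c := by
  rcases J.eq_empty_or_nonempty with rfl | ⟨y, hy⟩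
  · simp
  · refine ⟨f y, fun x hx => sub_eq_zero.1 (norm_le_zero_iff.1 ?_)⟩
    simpa using hJ.convex.norm_image_sub_le_of_norm_hasDerivWithin_le hf
      (fun _ _ => norm_zero.le) hy hx

lemma exists_eq_mul_of_mul_deriv_eq (hJ : J.OrdConnected) (h0J : (0 : ℝ) ∉ J)
    (hg : ∀ x ∈ J, HasDerivWithinAt g (g' x) J x) (hgeq : ∀ x ∈ J, x * g' x = g x) :
    ∃ c, ∀ x ∈ J, g x = c * x := by
  have ne_zero (x : ℝ) (hx : x ∈ J) : x ≠ 0 := ne_of_mem_of_not_mem hx h0J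
  obtain ⟨c, hc⟩ := exists_eq_const_of_hasDerivWithinAt_zero (f := fun x => g x / x) hJ
    fun x hx => by
      convert! (hg x hx).div (hasDerivWithinAt_id x J) (ne_zero x hx) using 1
      simp [← hgeq x hx, mul_comm x]
  exact ⟨c, fun x hx => (div_eq_iff (ne_zero x hx)).1 (hc x hx)⟩

lemma exists_eq_add_inv_of_mul_deriv_mul_eq (hJ : J.OrdConnected)
    (hf : ∀ x ∈ J, HasDerivWithinAt f (f' x) J x) (hg : ∀ x ∈ J, HasDerivWithinAt g (g' x) J x)
    (hgeq : ∀ x ∈ J, x * g' x = g x) (hfeq : ∀ x ∈ J, x * f' x * g x = -1) :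
    ∃ d, ∀ x ∈ J, f x = d + (g x)⁻¹ := by
  obtain ⟨d, hd⟩ := exists_eq_const_of_hasDerivWithinAt_zero (f := fun x => f x - (g x)⁻¹) hJ
    fun x hx => by
      have x_ne_zero : x ≠ 0 := by rintro rfl; simpa using hfeq 0 hx
      have g_ne_zero : g x ≠ 0 := fun h => by simpa [h] using hfeq x hx
      convert! (hf x hx).sub ((hg x hx).inv g_ne_zero) using 1
      have f'_eq : f' x = -1 / (x * g x) := by rw [eq_div_iff (by positivity), ← hfeq x hx]; ring
      have g'_eq : g' x = g x / x := by rw [eq_div_iff x_ne_zero, ← hgeq x hx, mul_comm]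
      rw [f'_eq, g'_eq]
      field_simp
      ring
  exact ⟨d, fun x hx => sub_eq_iff_eq_add.1 (hd x hx)⟩

end DifferentialEquation

lemma mul_pos_of_mem_of_ordConnected {J : Set ℝ} (hJ : J.OrdConnected) (h0J : (0 : ℝ) ∉ J)
    {x y : ℝ} (hx : x ∈ J) (hy : y ∈ J) : 0 < x * y := by
  by_contra! h
  rcases mul_nonpos_iff.1 h with h | h
  · exact h0J (hJ.out hy hx ⟨h.2, h.1⟩)
  · exact h0J (hJ.out hx hy h)

lemma monotoneOn_mul_comp_inv {F : ℝ → ℝ} (hpos : AntitoneOn F (Set.Ioi 0))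
    (hneg : AntitoneOn F (Set.Iio 0)) {J : Set ℝ} (hJ : J.OrdConnected) (h0J : (0 : ℝ) ∉ J)
    (c : ℝ) : MonotoneOn (fun x => c * F (c * x)⁻¹) J := by
  have antitone_of_mul_pos {u v : ℝ} (huv : 0 < u * v) (h : u ≤ v) : F v ≤ F u :=
    (pos_and_pos_or_neg_and_neg_of_mul_pos huv).elim (fun hu => hpos hu.1 hu.2 h)
      fun hu => hneg hu.1 hu.2 h
  intro x hx y hy hxy
  have hxy0 := mul_pos_of_mem_of_ordConnected hJ h0J hx hy
  have inv_le : y⁻¹ ≤ x⁻¹ := by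
    rw [← sub_nonneg, inv_sub_inv (left_ne_zero_of_mul hxy0.ne') (right_ne_zero_of_mul hxy0.ne')]
    exact div_nonneg (sub_nonneg.2 hxy) hxy0.le
  have mul_pos_of_ne_zero (hc : c ≠ 0) : 0 < (c * x)⁻¹ * (c * y)⁻¹ := by
    rw [← mul_inv, mul_mul_mul_comm]
    exact inv_pos.2 (mul_pos (mul_self_pos.2 hc) hxy0)
  simp only [mul_inv] at mul_pos_of_ne_zero ⊢
  rcases lt_trichotomy c 0 with hc | rfl | hc
  · exact mul_le_mul_of_nonpos_left (antitone_of_mul_pos (mul_pos_of_ne_zero hc.ne)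
      (mul_le_mul_of_nonpos_left inv_le (inv_nonpos.2 hc.le))) hc.le
  · simp
  · refine mul_le_mul_of_nonneg_left (antitone_of_mul_pos ?_
      (mul_le_mul_of_nonneg_left inv_le (inv_nonneg.2 hc.le))) hc.le
    rw [mul_comm]
    exact mul_pos_of_ne_zero hc.ne'

theorem stmt18_general {n m : Type*} [Fintype n] [DecidableEq n] [Fintype m] [DecidableEq m]
    {ρ : Matrix n n ℂ} (hρ : ρ.PosSemidef) (hρtr : ρ.trace ≤ 1)
    {X : Matrix n m ℂ} (hX : ρ * X ≠ 0)
    {J : Set ℝ} (hJ : J.OrdConnected) {f g f' g' : ℝ → ℝ}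
    (hf : ∀ x ∈ J, HasDerivWithinAt f (f' x) J x) (hg : ∀ x ∈ J, HasDerivWithinAt g (g' x) J x)
    (hgeq : ∀ x ∈ J, x * g' x = g x) (hfeq : ∀ x ∈ J, x * f' x * g x = -1) :
    MonotoneOn (fun x : ℝ =>
      (1 / x) * Real.log ((trace (matPow (Xᴴ * matPow ρ (f x) * X) (g x))).re)) J := by
  have h0J : (0 : ℝ) ∉ J := fun h => by simpa using hfeq 0 h
  obtain ⟨c, hc⟩ := exists_eq_mul_of_mul_deriv_eq hJ h0J hg hgeq
  obtain ⟨d, hd⟩ := exists_eq_add_inv_of_mul_deriv_mul_eq hJ hf hg hgeq hfeq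
  have A_ne_zero := supportCoords_ne_zero hρ hX
  have sum_le_one := (sum_pos_eigenvalues_eq_trace_re hρ).trans_le (Complex.le_def.1 hρtr).1
  refine (monotoneOn_mul_comp_inv
    (antitoneOn_mul_log_gramPowTrace_Ioi A_ne_zero (fun k => k.2) sum_le_one d)
    (antitoneOn_mul_log_gramPowTrace_Iio A_ne_zero (fun k => k.2) sum_le_one d) hJ h0J c).congr
    fun x hx => ?_
  have c_ne_zero : c ≠ 0 := by rintro rfl; simpa [hc x hx] using hfeq x hx
  simp only [conjTranspose_mul_matPow_mul hρ.isHermitian, hd x hx, hc x hx, gramPowTrace, inv_inv]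
  rw [mul_inv, ← mul_assoc, mul_inv_cancel_left₀ c_ne_zero, one_div]

/-- for a positive definite density matrix `ρ`, a nonzero positive
semidefinite `X`, an open interval `J ⊆ ℝ` with `0 ∉ J`, and differentiable functions
`f, g` on `J` satisfying `x·g′(x) = g(x)` and `x·f′(x)·g(x) = −1`, the function
`x ↦ (1/x)·log Tr[(X ρ^{f(x)} X)^{g(x)}]` is monotonically nondecreasing on `J`. -/
theorem stmt18 {n : Type*} [Fintype n] [DecidableEq n]
    (ρ X : Matrix n n ℂ) (hρ : ρ.PosDef) (hρtr : ρ.trace = 1)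
    (hX : X.PosSemidef) (hX0 : X ≠ 0)
    (J : Set ℝ) (hJopen : IsOpen J) (hJconn : J.OrdConnected) (h0J : (0 : ℝ) ∉ J)
    (f g : ℝ → ℝ)
    (hf : ∀ x ∈ J, DifferentiableAt ℝ f x)
    (hg : ∀ x ∈ J, DifferentiableAt ℝ g x)
    (hgeq : ∀ x ∈ J, x * deriv g x = g x)
    (hfeq : ∀ x ∈ J, x * deriv f x * g x = -1) :
    MonotoneOn (fun x : ℝ =>
      (1 / x) * Real.log ((Matrix.trace (matPow (X * matPow ρ (f x) * X) (g x))).re)) J := by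
  simpa only [hX.isHermitian.eq] using stmt18_general hρ.posSemidef hρtr.le
    (mt hρ.isUnit.mul_right_eq_zero.1 hX0) hJconn
    (fun x hx => (hf x hx).hasDerivAt.hasDerivWithinAt)
    (fun x hx => (hg x hx).hasDerivAt.hasDerivWithinAt) hgeq hfeq
end
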